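/- arXiv:1901.10393 — 3 statements merged into one kernel-verified Lean document; each statement's English description precedes it below -/
import Mathlib

section
/- Let F be a conformal Frobenius manifold potential on a simply connected open M ⊆ ℂ^N, with a fixed calibration (Ω^{α,0}_{β,d}, R_n), and let F^o on M×U (U ⊆ ℂ simply connected open) satisfy the open WDVV equations, the unit condition, and the homogeneity condition. Then the space of calibrations of F^o is non-empty: there exist analytic functions Φ_{β,d} (1 ≤ β ≤ N+1, d ≥ −1) and matrices R̃_n forming a calibration of F^o. -/
/-!
The functions `Φ_{β,d}` are constructed by induction on `d`. Put `G_{γμ} = ∂_γ∂_μ F^o`, and let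
`X_d` be the `(N+1)`-square matrix of functions whose first `N` rows are `Ω_d` (with last column
zero) and whose last row is `Φ_d`. The equation to solve is `dΦ_{β,d+1} = ∑_μ dt^γ G_{γμ} X^μ_{β,d}`.

* The right-hand side is a closed 1-form: since `∂_l X_d = C_l X_{d-1}`, where the last row of `C_l`
  is the Hessian of `F^o`, closedness reduces to the symmetry of `∑_μ G_{γμ} C^μ_{lν}` in `γ, l`,
  which is a reformulation of the open WDVV equations (`structC_comm`).
* `M × U` is simply connected, so a holomorphic primitive exists (`exists_primitive`, proved by
  lifting the identity to the covering space of germs of primitives), and it is analytic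
  (`analyticAt_of_fderiv`).
* The homogeneity of `F^o` makes `G` homogeneous (`eul_hess`). Applying `∂_γ` to the difference of
  the two sides of the Euler equation for `Φ_{β,d+1}` gives zero, so that equation holds up to a
  constant `h` (`exists_step`).
* With `a = d + 3/2 + μ^β`, adding `h / a` to the primitive removes the constant if `a ≠ 0`. If
  `a = 0`, the constant is taken as the entry `(R̃_{d+2})^{N+1}_β`; the relation
  `[μ̃, R̃_n] = n R̃_n` for this entry says exactly `a · h = 0`. For `β = N+1` one has
  `a = d + 2 ≠ 0`, so the last column of `R̃` stays zero (`exists_good`).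
-/

/-!
STATEMENT 5: For a conformal Frobenius manifold potential `F` on a simply connected open
`M ⊆ ℂ^N` with a fixed calibration `(Ω^{α,0}_{β,d}, R_n)`, and a solution `F^o` of the
open WDVV equations on `M×U` satisfying the unit and homogeneity conditions, the space of
calibrations of `F^o` is non-empty.
-/

noncomputable section

abbrev Pt (n : ℕ) := Fin n → ℂ
abbrev Fn (n : ℕ) := (Fin n → ℂ) → ℂ

noncomputable def pd {n : ℕ} (i : Fin n) (f : Fn n) : Fn n :=
  fun x => fderiv ℂ f x (Pi.single i 1)

def prj {N : ℕ} (x : Pt (N + 1)) : Pt N := fun i => x i.castSucc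

/-- The entries `Ω^{μ,0}_{β,d}` with the lower index `β` ranging over `1,…,N+1`,
using the convention `Ω^{μ,0}_{N+1,d} = 0`, as functions on `M×U`. -/
noncomputable def OmE {N : ℕ} (Ω : ℤ → Pt N → Matrix (Fin N) (Fin N) ℂ)
    (d : ℤ) (μ : Fin N) (β : Fin (N + 1)) : Fn (N + 1) :=
  fun x => if hβ : β = Fin.last N then 0 else Ω d (prj x) μ (β.castPred hβ)

section helpers
open Set Topology

/-! ### Primitives of closed holomorphic 1-forms -/

/-- The additive group `ℂ` with the discrete topology: the fibre of the covering space of local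
primitives of a closed 1-form. -/
def DiscreteC : Type := ℂ
instance : TopologicalSpace DiscreteC := ⊥
instance : DiscreteTopology DiscreteC := ⟨rfl⟩

/-- Translation by `w` on the discrete group `ℂ`. -/
def DiscreteC.shift (w : ℂ) : DiscreteC → DiscreteC := fun v : ℂ => (v + w : ℂ)

section
variable {V : Type*} [NormedAddCommGroup V] [NormedSpace ℂ V]

/-- Local Poincaré lemma, on a ball around each point. -/
lemma exists_ball_primitive {X : Set V} (hX : IsOpen X) {ω : V → V →L[ℂ] ℂ}
    (hω : DifferentiableOn ℂ ω X)
    (hsymm : ∀ a ∈ X, ∀ x y, fderiv ℂ ω a x y = fderiv ℂ ω a y x) (a : V) (ha : a ∈ X) :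
    ∃ ρ > 0, Metric.ball a ρ ⊆ X ∧ ∃ f : V → ℂ, ∀ x ∈ Metric.ball a ρ, HasFDerivAt f (ω x) x := by
  obtain ⟨ρ, hρ, hb⟩ := Metric.isOpen_iff.1 hX a ha
  refine ⟨ρ, hρ, hb, ?_⟩
  refine (convex_ball a ρ).exists_forall_hasFDerivAt_of_fderiv_symmetric Metric.isOpen_ball
    (fun x hx => ?_) (fun x hx u v => ?_)
  · exact (((hω x (hb hx)).differentiableAt (hX.mem_nhds (hb hx))).restrictScalars ℝ).differentiableWithinAt
  · have h := (hω x (hb hx)).differentiableAt (hX.mem_nhds (hb hx))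
    rw [h.fderiv_restrictScalars ℝ]
    exact hsymm x (hb hx) u v

/-- Poincaré lemma: a closed holomorphic 1-form on a simply connected open set has a primitive.
Germs of primitives form a covering space, encoded as a bundle with discrete fibre `ℂ` whose
transition functions are the (locally constant) differences of primitives on small balls; a global
section exists because the base is simply connected. -/
theorem exists_primitive {X : Set V} (hX : IsOpen X) [SimplyConnectedSpace X]
    {ω : V → V →L[ℂ] ℂ} (hω : DifferentiableOn ℂ ω X)
    (hsymm : ∀ a ∈ X, ∀ x y, fderiv ℂ ω a x y = fderiv ℂ ω a y x) :
    ∃ f : V → ℂ, ∀ x ∈ X, HasFDerivAt f (ω x) x := by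
  have key := fun a : X => exists_ball_primitive hX hω hsymm a.1 a.2
  choose ρ hρ hb f hf using key
  -- two local primitives differ by a constant on the overlap of their balls
  have hconst : ∀ (i j : X) (x y : V), x ∈ Metric.ball i.1 (ρ i) → x ∈ Metric.ball j.1 (ρ j) →
      y ∈ Metric.ball i.1 (ρ i) → y ∈ Metric.ball j.1 (ρ j) →
      f i x - f j x = f i y - f j y := by
    intro i j x y hxi hxj hyi hyj
    have hd : ∀ z ∈ Metric.ball i.1 (ρ i) ∩ Metric.ball j.1 (ρ j),
        HasFDerivWithinAt (fun z => f i z - f j z) (0 : V →L[ℂ] ℂ)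
          (Metric.ball i.1 (ρ i) ∩ Metric.ball j.1 (ρ j)) z := by
      intro z hz
      have := (hf i z hz.1).sub (hf j z hz.2)
      rw [sub_self] at this
      exact this.hasFDerivWithinAt
    have hcv : Convex ℝ (Metric.ball i.1 (ρ i) ∩ Metric.ball j.1 (ρ j)) :=
      (convex_ball _ _).inter (convex_ball _ _)
    exact hcv.is_const_of_fderivWithin_eq_zero (𝕜 := ℂ)
      (fun z hz => (hd z hz).differentiableWithinAt)
      (fun z hz => (hd z hz).fderivWithin
        ((Metric.isOpen_ball.inter Metric.isOpen_ball).uniqueDiffWithinAt hz)) ⟨hxi, hxj⟩ ⟨hyi, hyj⟩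
  let Z : FiberBundleCore X X DiscreteC :=
    { baseSet := fun i => {x | x.1 ∈ Metric.ball i.1 (ρ i)}
      isOpen_baseSet := fun i => Metric.isOpen_ball.preimage continuous_subtype_val
      indexAt := id
      mem_baseSet_at := fun x => Metric.mem_ball_self (hρ x)
      coordChange := fun i j x => DiscreteC.shift (f i x.1 - f j x.1)
      coordChange_self := fun i x _ (v : ℂ) => by
        show (v + (f i x.1 - f i x.1) : ℂ) = v
        ring
      continuousOn_coordChange := by
        intro i j
        rintro ⟨x, c⟩ ⟨⟨hxi, hxj⟩, -⟩
        have : ContinuousWithinAt (fun p : X × DiscreteC => DiscreteC.shift (f i x.1 - f j x.1) p.2)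
            (({y : X | y.1 ∈ Metric.ball i.1 (ρ i)} ∩ {y : X | y.1 ∈ Metric.ball j.1 (ρ j)}) ×ˢ univ)
            (x, c) :=
          ((continuous_of_discreteTopology (f := DiscreteC.shift (f i x.1 - f j x.1))).comp continuous_snd).continuousWithinAt
        refine this.congr (g := fun p : X × DiscreteC =>
          DiscreteC.shift (f i p.1.1 - f j p.1.1) p.2) ?_ rfl
        rintro ⟨y, v⟩ ⟨⟨hyi, hyj⟩, -⟩
        show DiscreteC.shift (f i y.1 - f j y.1) v = DiscreteC.shift (f i x.1 - f j x.1) v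
        rw [hconst i j x.1 y.1 hxi hxj hyi hyj]
      coordChange_comp := by
        intro i j k x _ (v : ℂ)
        show (v + (f i x.1 - f j x.1) + (f j x.1 - f k x.1) : ℂ) = v + (f i x.1 - f k x.1)
        ring }
  have hcov : IsCoveringMap Z.proj :=
    IsCoveringMap.mk _ (fun _ => DiscreteC) (fun x => Z.localTriv x)
      (fun x => Metric.mem_ball_self (hρ x))
  have : LocallyPathConnectedSpace X := hX.locallyPathConnectedSpace
  obtain ⟨x₀⟩ : Nonempty X := inferInstance
  obtain ⟨s, ⟨-, hs⟩, -⟩ := hcov.existsUnique_continuousMap_lifts (ContinuousMap.id X) x₀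
    (⟨x₀, (0 : ℂ)⟩ : Z.TotalSpace) rfl
  -- value of the section in the chart centred at the point itself, corrected to a primitive
  let c : X → ℂ := fun x => (Z.localTriv x (s x)).2
  classical
  let g : V → ℂ := fun x => if h : x ∈ X then c ⟨x, h⟩ + f ⟨x, h⟩ x else 0
  refine ⟨g, fun x hx => ?_⟩
  have hproj : ∀ y, (s y).1 = y := fun y => congrFun hs y
  have hchart : ∀ y : X, ((Z.localTriv ⟨x, hx⟩ (s y)).2 : ℂ) = c y + f y y.1 - f ⟨x, hx⟩ y.1 := by
    intro y
    obtain ⟨v, hv⟩ : ∃ v : ℂ, ∀ i : X, ((Z.localTriv i (s y)).2 : ℂ) =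
        v + (f (s y).1 (s y).1.1 - f i (s y).1.1) := ⟨(s y).2, fun i => rfl⟩
    have h2 : c y = v + (f (s y).1 (s y).1.1 - f y (s y).1.1) := hv y
    have h3 : ∀ a b : ℂ, v + (a - b) = v + (a - a) + a - b := by intros; ring
    rw [hv, h2, hproj]
    exact h3 _ _
  have hcont : ContinuousAt (fun y : X => (Z.localTriv ⟨x, hx⟩ (s y)).2) ⟨x, hx⟩ := by
    have h1 : ContinuousAt (Z.localTriv ⟨x, hx⟩) (s ⟨x, hx⟩) := by
      apply (Z.localTriv ⟨x, hx⟩).continuousAt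
      rw [Z.mem_localTriv_source, hproj]
      exact Metric.mem_ball_self (hρ _)
    exact (continuous_snd.continuousAt.comp h1).comp s.continuous.continuousAt
  have hev : ∀ᶠ y : X in 𝓝 ⟨x, hx⟩,
      (Z.localTriv ⟨x, hx⟩ (s y)).2 = (Z.localTriv ⟨x, hx⟩ (s ⟨x, hx⟩)).2 :=
    hcont.eventually (p := fun z => z = (Z.localTriv ⟨x, hx⟩ (s ⟨x, hx⟩)).2) (by simp [nhds_discrete])
  have hev' : ∀ᶠ y : V in 𝓝 x, g y = f ⟨x, hx⟩ y + c ⟨x, hx⟩ := by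
    rw [nhds_subtype_eq_comap, Filter.eventually_comap] at hev
    filter_upwards [hev, hX.mem_nhds hx] with y hy hyX
    have := hy ⟨y, hyX⟩ rfl
    have h2 := hchart ⟨y, hyX⟩
    rw [this] at h2
    simp only [g, hyX, dif_pos]
    change c ⟨x, hx⟩ = _ at h2
    rw [h2]; ring
  exact ((hf ⟨x, hx⟩ x (Metric.mem_ball_self (hρ _))).add_const (c ⟨x, hx⟩)).congr_of_eventuallyEq hev'
end

/-! ### Simple connectedness of products -/

lemma simplyConnected_prod {X Y : Type*} [TopologicalSpace X] [TopologicalSpace Y]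
    [SimplyConnectedSpace X] [SimplyConnectedSpace Y] : SimplyConnectedSpace (X × Y) := by
  rw [simply_connected_iff_paths_homotopic]
  refine ⟨inferInstance, fun p q => ⟨fun a b => ?_⟩⟩
  rw [← Path.Homotopic.prod_projLeft_projRight a, ← Path.Homotopic.prod_projLeft_projRight b]
  congr 1 <;> exact Subsingleton.elim _ _

/-! ### Analyticity from an analytic derivative -/

section
variable {V : Type*} [NormedAddCommGroup V] [NormedSpace ℂ V]

lemma hasSum_clm_apply {a : ℕ → V →L[ℂ] ℂ} {L : V →L[ℂ] ℂ} (h : HasSum a L) (y : V) :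
    HasSum (fun n => a n y) (L y) :=
  h.map (ContinuousLinearMap.apply ℂ ℂ y) (ContinuousLinearMap.apply ℂ ℂ y).continuous

/-- A function with analytic derivative is analytic. In several complex variables Mathlib does not
provide analyticity from differentiability, so the power series of the derivative is integrated
along rays: the degree-`n` term gets divided by `n + 1`. -/
lemma analyticAt_of_fderiv {f : V → ℂ} {ω : V → V →L[ℂ] ℂ} {x : V} (hω : AnalyticAt ℂ ω x)
    (hf : ∀ᶠ z in 𝓝 x, HasFDerivAt f (ω z) z) : AnalyticAt ℂ f x := by
  obtain ⟨p, r₀, hp₀⟩ := hω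
  obtain ⟨ε, hε, hball⟩ := Metric.eventually_nhds_iff_ball.1 hf
  -- a common radius for the expansion of `ω` and for the differentiability of `f`
  set r : ENNReal := min r₀ (ENNReal.ofReal ε) with hr
  have hrpos : 0 < r := lt_min hp₀.r_pos (by simpa using hε)
  have hp : HasFPowerSeriesOnBall ω p x r := hp₀.mono hrpos (min_le_left _ _)
  have hfr : ∀ y ∈ Metric.eball (0 : V) r, HasFDerivAt f (ω (x + y)) (x + y) := by
    intro y hy
    apply hball
    have h1 : y ∈ Metric.eball (0 : V) (ENNReal.ofReal ε) :=
      Metric.eball_subset_eball (min_le_right _ _) hy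
    rw [Metric.eball_ofReal] at h1
    simpa using h1
  let s : FormalMultilinearSeries ℂ V (V →L[ℂ] ℂ) := fun n => ((n : ℂ) + 1)⁻¹ • p n
  have hnorm : ∀ n, ‖s n‖ ≤ ‖p n‖ := by
    intro n
    have h1 : ‖((n : ℂ) + 1)⁻¹‖ ≤ 1 := by
      rw [norm_inv]
      apply inv_le_one_of_one_le₀
      have : ((n : ℂ) + 1) = ((n + 1 : ℕ) : ℂ) := by push_cast; ring
      rw [this, Complex.norm_natCast]
      push_cast
      linarith [(Nat.cast_nonneg n : (0 : ℝ) ≤ n)]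
    calc ‖s n‖ ≤ ‖((n : ℂ) + 1)⁻¹‖ * ‖p n‖ := (norm_smul (((n : ℂ) + 1)⁻¹) (p n)).le
      _ ≤ 1 * ‖p n‖ := by gcongr
      _ = ‖p n‖ := one_mul _
  have hrad : p.radius ≤ s.radius := by
    refine ENNReal.le_of_forall_nnreal_lt fun ρ hρ => ?_
    obtain ⟨C, -, hC⟩ := p.norm_mul_pow_le_of_lt_radius hρ
    exact s.le_radius_of_bound C fun n =>
      (mul_le_mul_of_nonneg_right (hnorm n) (by positivity)).trans (hC n)
  have hs : HasFPowerSeriesOnBall s.sum s 0 r :=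
    (s.hasFPowerSeriesOnBall (hrpos.trans_le (hp.r_le.trans hrad))).mono hrpos (hp.r_le.trans hrad)
  have hs' : HasFPowerSeriesOnBall (fun z => s.sum (z - x)) s x r := by
    simpa using hs.comp_sub x
  have hmain : ∀ y ∈ Metric.eball (0 : V) r, f (x + y) = f x + s.sum y y := by
    intro y hy
    have hty : ∀ t ∈ Icc (0 : ℝ) 1, (t : ℂ) • y ∈ Metric.eball (0 : V) r := by
      intro t ht
      rw [mem_eball_zero_iff] at hy ⊢
      refine lt_of_le_of_lt ?_ hy
      rw [enorm_smul]
      have : ‖(t : ℂ)‖ₑ ≤ 1 := by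
        rw [← ofReal_norm]
        rw [Complex.norm_real, Real.norm_of_nonneg ht.1]
        exact ENNReal.ofReal_le_one.2 ht.2
      calc ‖(t : ℂ)‖ₑ * ‖y‖ₑ ≤ 1 * ‖y‖ₑ := by gcongr
        _ = ‖y‖ₑ := one_mul _
    have huI : uIcc (0 : ℝ) 1 = Icc 0 1 := uIcc_of_le zero_le_one
    have hder : ∀ t ∈ uIcc (0 : ℝ) 1,
        HasDerivAt (fun t : ℝ => f (x + (t : ℂ) • y)) (ω (x + (t : ℂ) • y) y) t := by
      intro t ht
      rw [huI] at ht
      have h1 : HasDerivAt (fun t : ℝ => x + (t : ℂ) • y) y t := by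
        have h2 : HasDerivAt (fun t : ℝ => (t : ℂ)) 1 t := Complex.ofRealCLM.hasDerivAt
        simpa using (h2.smul_const y).const_add x
      have h3 := ((hfr _ (hty t ht)).restrictScalars ℝ).comp_hasDerivAt t h1
      exact h3
    have hcont : ContinuousOn (fun t : ℝ => ω (x + (t : ℂ) • y) y) (uIcc 0 1) := by
      rw [huI]
      have h1 : ContinuousOn (fun t : ℝ => ω (x + (t : ℂ) • y)) (Icc 0 1) := by
        refine hp.continuousOn.comp (Continuous.continuousOn (by fun_prop)) ?_
        intro t ht
        have := hty t ht
        rw [mem_eball_zero_iff] at this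
        rw [Metric.mem_eball, edist_eq_enorm_sub]
        simpa using this
      exact h1.clm_apply continuousOn_const
    have hint := intervalIntegral.integral_eq_sub_of_hasDerivAt hder hcont.intervalIntegrable
    have hsum : HasSum (fun n => ∫ t in (0:ℝ)..1, ((t : ℂ) ^ n * p n (fun _ => y) y))
        (∫ t in (0:ℝ)..1, ω (x + (t : ℂ) • y) y) := by
      have hyr : (‖y‖₊ : ENNReal) < p.radius := by
        rw [mem_eball_zero_iff] at hy
        exact lt_of_lt_of_le hy hp.r_le
      refine intervalIntegral.hasSum_integral_of_dominated_convergence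
        (fun n _ => ‖p n‖ * (‖y‖₊ : ℝ) ^ n * ‖y‖) (fun n => ?_) (fun n => ?_) ?_ ?_ ?_
      · exact (Continuous.aestronglyMeasurable (by fun_prop))
      · refine Filter.Eventually.of_forall fun t ht => ?_
        rw [uIoc_of_le zero_le_one] at ht
        rw [norm_mul, norm_pow, Complex.norm_real, Real.norm_of_nonneg ht.1.le]
        have h1 : ‖p n (fun _ => y) y‖ ≤ ‖p n‖ * ‖y‖ ^ n * ‖y‖ := by
          refine (ContinuousLinearMap.le_opNorm _ _).trans ?_
          gcongr
          simpa using (p n).le_opNorm (fun _ => y)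
        calc t ^ n * ‖p n (fun _ => y) y‖ ≤ 1 * ‖p n (fun _ => y) y‖ := by
              gcongr
              exact pow_le_one₀ ht.1.le ht.2
          _ ≤ _ := by rw [one_mul]; exact h1
      · exact Filter.Eventually.of_forall fun t _ => (p.summable_norm_mul_pow hyr).mul_right _
      · exact intervalIntegrable_const
      · refine Filter.Eventually.of_forall fun t ht => ?_
        rw [uIoc_of_le zero_le_one] at ht
        have h1 := hp.hasSum (hty t ⟨ht.1.le, ht.2⟩)
        have h2 := hasSum_clm_apply h1 y
        have h3 : ∀ n, p n (fun _ => (t : ℂ) • y) = (t : ℂ) ^ n • p n (fun _ => y) := by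
          intro n
          simpa using (p n).map_smul_univ (fun _ => (t : ℂ)) (fun _ => y)
        simp only [h3] at h2
        exact h2
    have hsum2 : HasSum (fun n => s n (fun _ => y) y) (s.sum y y) := by
      have h1 := hs.hasSum hy
      rw [zero_add] at h1
      exact hasSum_clm_apply h1 y
    have heq : (fun n => ∫ t in (0:ℝ)..1, ((t : ℂ) ^ n * p n (fun _ => y) y)) =
        fun n => s n (fun _ => y) y := by
      funext n
      rw [intervalIntegral.integral_mul_const]
      have h1 : ∫ t in (0:ℝ)..1, (t : ℂ) ^ n = ((n : ℂ) + 1)⁻¹ := by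
        have : ∫ t in (0:ℝ)..1, (t : ℂ) ^ n = ((∫ t in (0:ℝ)..1, t ^ n : ℝ) : ℂ) := by
          rw [← intervalIntegral.integral_ofReal]; simp
        rw [this, integral_pow]
        simp
      rw [h1]
      rfl
    rw [heq] at hsum
    have h5 := hsum.unique hsum2
    rw [hint] at h5
    simp only [Complex.ofReal_one, one_smul, Complex.ofReal_zero, zero_smul, add_zero] at h5
    rw [← h5]; ring
  have hfin := (hs'.unshift (z := f x)).congr (g := f) (fun z hz => ?_)
  · exact hfin.analyticAt
  · have hy : z - x ∈ Metric.eball (0 : V) r := by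
      rw [mem_eball_zero_iff]
      rwa [Metric.mem_eball, edist_eq_enorm_sub] at hz
    have := hmain _ hy
    simp only [add_sub_cancel] at this
    exact this.symm
end

/-! ### Partial derivatives and Euler fields -/

/-- The affine vector field `Σ (e^γ x^γ + ρ^γ) ∂_γ` with diagonal linear part, acting on functions. -/
def eul {m : ℕ} (e ρ : Fin m → ℂ) (f : Fn m) : Fn m :=
  fun x => ∑ γ, (e γ * x γ + ρ γ) * pd γ f x

section calculus
variable {m : ℕ} {S : Set (Pt m)}

lemma pd_congr {f g : Fn m} (hS : IsOpen S) (h : ∀ x ∈ S, f x = g x) {x : Pt m} (hx : x ∈ S)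
    (i : Fin m) : pd i f x = pd i g x := by
  have : f =ᶠ[𝓝 x] g := Filter.eventually_of_mem (hS.mem_nhds hx) h
  simp only [pd, this.fderiv_eq]

lemma pd_add {f g : Fn m} {x : Pt m} (hf : DifferentiableAt ℂ f x) (hg : DifferentiableAt ℂ g x)
    (i : Fin m) : pd i (fun y => f y + g y) x = pd i f x + pd i g x := by
  simp [pd, fderiv_fun_add hf hg]

lemma pd_sub {f g : Fn m} {x : Pt m} (hf : DifferentiableAt ℂ f x) (hg : DifferentiableAt ℂ g x)
    (i : Fin m) : pd i (fun y => f y - g y) x = pd i f x - pd i g x := by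
  simp [pd, fderiv_fun_sub hf hg]

lemma pd_mul {f g : Fn m} {x : Pt m} (hf : DifferentiableAt ℂ f x) (hg : DifferentiableAt ℂ g x)
    (i : Fin m) : pd i (fun y => f y * g y) x = f x * pd i g x + pd i f x * g x := by
  simp [pd, fderiv_fun_mul hf hg]; ring

lemma pd_const_mul {f : Fn m} {x : Pt m} (hf : DifferentiableAt ℂ f x) (c : ℂ)
    (i : Fin m) : pd i (fun y => c * f y) x = c * pd i f x := by
  simp [pd, fderiv_const_mul hf]

lemma pd_mul_const {f : Fn m} {x : Pt m} (hf : DifferentiableAt ℂ f x) (c : ℂ)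
    (i : Fin m) : pd i (fun y => f y * c) x = pd i f x * c := by
  simp [pd, fderiv_mul_const hf]; ring

lemma pd_const (c : ℂ) (x : Pt m) (i : Fin m) : pd i (fun _ => c) x = 0 := by
  simp [pd]

lemma pd_sum {ι : Type*} {s : Finset ι} {f : ι → Fn m} {x : Pt m}
    (hf : ∀ j ∈ s, DifferentiableAt ℂ (f j) x) (i : Fin m) :
    pd i (fun y => ∑ j ∈ s, f j y) x = ∑ j ∈ s, pd i (f j) x := by
  simp [pd, fderiv_fun_sum hf]

lemma pd_coord (x : Pt m) (i j : Fin m) : pd i (fun y => y j) x = if j = i then 1 else 0 := by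
  have : HasFDerivAt (fun y : Pt m => y j) (ContinuousLinearMap.proj (R := ℂ) (φ := fun _ : Fin m => ℂ) j) x :=
    hasFDerivAt_apply j x
  simp [pd, this.fderiv, Pi.single_apply]

lemma analyticOnNhd_pd {f : Fn m} (hf : AnalyticOnNhd ℂ f S) (i : Fin m) :
    AnalyticOnNhd ℂ (pd i f) S :=
  (ContinuousLinearMap.apply ℂ ℂ (Pi.single i (1 : ℂ) : Pt m)).comp_analyticOnNhd hf.fderiv

lemma analyticOnNhd_coord (j : Fin m) : AnalyticOnNhd ℂ (fun y : Pt m => y j) S :=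
  (ContinuousLinearMap.proj (R := ℂ) (φ := fun _ : Fin m => ℂ) j).analyticOnNhd S

lemma pd_comm {f : Fn m} {x : Pt m} (hf : AnalyticAt ℂ f x) (i j : Fin m) :
    pd i (pd j f) x = pd j (pd i f) x := by
  have hd : DifferentiableAt ℂ (fderiv ℂ f) x := hf.fderiv.differentiableAt
  have h : ∀ a b : Fin m, pd a (pd b f) x = fderiv ℂ (fderiv ℂ f) x (Pi.single a 1) (Pi.single b 1) := by
    intro a b
    have := hd.hasFDerivAt.clm_apply (hasFDerivAt_const (Pi.single b (1 : ℂ) : Pt m) x)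
    change fderiv ℂ (fun y => fderiv ℂ f y (Pi.single b 1)) x _ = _
    rw [this.fderiv]
    simp
  rw [h, h]
  exact (hf.contDiffAt (n := ⊤)).isSymmSndFDerivAt (by simp) _ _

lemma fderiv_eq_sum_pd (f : Fn m) (x v : Pt m) : fderiv ℂ f x v = ∑ i, v i * pd i f x := by
  conv_lhs => rw [pi_eq_sum_univ' v]
  rw [map_sum]
  refine Finset.sum_congr rfl fun i _ => ?_
  rw [map_smul, smul_eq_mul]
  rfl

lemma eq_const_of_pd_eq_zero (hS : IsOpen S) (hSc : IsPreconnected S) {f : Fn m}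
    (hf : DifferentiableOn ℂ f S) (h : ∀ x ∈ S, ∀ i, pd i f x = 0) :
    ∃ c, ∀ x ∈ S, f x = c := by
  refine hS.exists_is_const_of_fderiv_eq_zero hSc hf fun x hx => ?_
  ext v
  simp [fderiv_eq_sum_pd, h x hx]

/-- A closed holomorphic 1-form on a simply connected domain has a holomorphic potential. -/
lemma exists_potential (hS : IsOpen S) [SimplyConnectedSpace S] {w : Fin m → Fn m}
    (hw : ∀ i, AnalyticOnNhd ℂ (w i) S)
    (hcl : ∀ x ∈ S, ∀ i j, pd i (w j) x = pd j (w i) x) :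
    ∃ f : Fn m, AnalyticOnNhd ℂ f S ∧ ∀ x ∈ S, ∀ i, pd i f x = w i x := by
  let ω : Pt m → Pt m →L[ℂ] ℂ := fun x =>
    ∑ i, w i x • (ContinuousLinearMap.proj (R := ℂ) (φ := fun _ : Fin m => ℂ) i)
  have hωan : AnalyticOnNhd ℂ ω S := fun x hx =>
    Finset.analyticAt_fun_sum _ fun i _ => (hw i x hx).smul analyticAt_const
  have hωd : ∀ x ∈ S, ∀ u v, fderiv ℂ ω x u v = ∑ j, ∑ i, u i * v j * pd i (w j) x := by
    intro x hx u v
    have h1 : HasFDerivAt ω (∑ j, (fderiv ℂ (w j) x).smulRight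
        (ContinuousLinearMap.proj (R := ℂ) (φ := fun _ : Fin m => ℂ) j)) x :=
      HasFDerivAt.fun_sum fun j _ =>
        HasFDerivAt.smul_const (F := Pt m →L[ℂ] ℂ) (hw j x hx).differentiableAt.hasFDerivAt
          (ContinuousLinearMap.proj (R := ℂ) (φ := fun _ : Fin m => ℂ) j)
    rw [h1.fderiv]
    simp only [sum_apply, ContinuousLinearMap.smulRight_apply,
      smul_apply, ContinuousLinearMap.proj_apply, smul_eq_mul,
      fderiv_eq_sum_pd, Finset.sum_mul]
    exact Finset.sum_congr rfl fun j _ => Finset.sum_congr rfl fun i _ => by ring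
  obtain ⟨f, hf⟩ := exists_primitive hS hωan.differentiableOn (by
    intro x hx u v
    rw [hωd x hx, hωd x hx, Finset.sum_comm]
    refine Finset.sum_congr rfl fun j _ => Finset.sum_congr rfl fun i _ => ?_
    rw [hcl x hx j i]; ring)
  refine ⟨f, fun x hx => analyticAt_of_fderiv (hωan x hx)
    (Filter.eventually_of_mem (hS.mem_nhds hx) hf), fun x hx i => ?_⟩
  simp [pd, (hf x hx).fderiv, ω, Pi.single_apply]

lemma analyticOnNhd_eul {e ρ : Fin m → ℂ} {f : Fn m} (hf : AnalyticOnNhd ℂ f S) :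
    AnalyticOnNhd ℂ (eul e ρ f) S := fun x hx =>
  Finset.analyticAt_fun_sum _ fun γ _ =>
    (((analyticAt_const.mul (analyticOnNhd_coord (S := S) γ x hx)).add analyticAt_const).mul
      (analyticOnNhd_pd hf γ x hx))

/-- The commutator of `∂_i` with the affine field is `e^i ∂_i`. -/
lemma pd_eul {e ρ : Fin m → ℂ} {f : Fn m} {x : Pt m} (hf : AnalyticOnNhd ℂ f S) (hx : x ∈ S)
    (i : Fin m) : pd i (eul e ρ f) x = e i * pd i f x + eul e ρ (pd i f) x := by
  have hc : ∀ γ, DifferentiableAt ℂ (fun y : Pt m => y γ) x := fun γ =>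
    (analyticOnNhd_coord (S := S) γ x hx).differentiableAt
  have hp : ∀ γ, DifferentiableAt ℂ (pd γ f) x := fun γ =>
    (analyticOnNhd_pd hf γ x hx).differentiableAt
  have hl : ∀ γ, DifferentiableAt ℂ (fun y : Pt m => e γ * y γ + ρ γ) x := fun γ =>
    ((hc γ).const_mul _).add_const _
  unfold eul
  rw [pd_sum fun γ _ => (hl γ).fun_mul (hp γ)]
  have : ∀ γ, pd i (fun y => (e γ * y γ + ρ γ) * pd γ f y) x =
      (e γ * x γ + ρ γ) * pd γ (pd i f) x + (if γ = i then e γ * pd γ f x else 0) := by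
    intro γ
    rw [pd_mul (hl γ) (hp γ), pd_add ((hc γ).const_mul _) (differentiableAt_const _),
      pd_const_mul (hc γ), pd_const, pd_coord, pd_comm (hf x hx) i γ]
    split_ifs <;> ring
  simp only [this, Finset.sum_add_distrib, Finset.sum_ite_eq', Finset.mem_univ, if_true]
  ring

lemma eul_mul {e ρ : Fin m → ℂ} {f g : Fn m} {x : Pt m} (hf : DifferentiableAt ℂ f x)
    (hg : DifferentiableAt ℂ g x) :
    eul e ρ (fun y => f y * g y) x = f x * eul e ρ g x + eul e ρ f x * g x := by
  simp only [eul, pd_mul hf hg, Finset.mul_sum, Finset.sum_mul, ← Finset.sum_add_distrib]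
  exact Finset.sum_congr rfl fun _ _ => by ring

lemma eul_sum {e ρ : Fin m → ℂ} {ι : Type*} {s : Finset ι} {f : ι → Fn m} {x : Pt m}
    (hf : ∀ j ∈ s, DifferentiableAt ℂ (f j) x) :
    eul e ρ (fun y => ∑ j ∈ s, f j y) x = ∑ j ∈ s, eul e ρ (f j) x := by
  simp only [eul, pd_sum hf, Finset.mul_sum]
  exact Finset.sum_comm

lemma eul_congr {e ρ : Fin m → ℂ} {f g : Fn m} (hS : IsOpen S) (h : ∀ x ∈ S, f x = g x)
    {x : Pt m} (hx : x ∈ S) : eul e ρ f x = eul e ρ g x := by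
  simp only [eul, pd_congr hS h hx]

/-- One integration step: if `Y` solves (up to lower order terms `V`) an Euler equation and
`G·Y` is a closed 1-form, then it has a potential satisfying the Euler equation up to a constant. -/
lemma exists_step (hS : IsOpen S) [SimplyConnectedSpace S]
    {G : Fin m → Fin m → Fn m} (hG : ∀ γ μ, AnalyticOnNhd ℂ (G γ μ) S)
    (hGd : ∀ x ∈ S, ∀ i γ μ, pd i (G γ μ) x = pd γ (G i μ) x)
    {Ct : Fin m → Fin m → Fin m → Fn m}
    (hCt : ∀ x ∈ S, ∀ γ l ν, ∑ μ, G γ μ x * Ct l μ ν x = ∑ μ, G l μ x * Ct γ μ ν x)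
    {e ρ mu : Fin m → ℂ}
    (hGe : ∀ x ∈ S, ∀ γ μ, eul e ρ (G γ μ) x = (1/2 - e γ + mu μ) * G γ μ x)
    {Y V : Fin m → Fn m} (hY : ∀ μ, AnalyticOnNhd ℂ (Y μ) S)
    (hYd : ∀ x ∈ S, ∃ Z : Fin m → ℂ, ∀ l μ, pd l (Y μ) x = ∑ ν, Ct l μ ν x * Z ν)
    {c : ℂ} (hYe : ∀ x ∈ S, ∀ μ, eul e ρ (Y μ) x = (c - mu μ) * Y μ x + V μ x)
    {T : Fn m} (hT : AnalyticOnNhd ℂ T S)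
    (hTd : ∀ x ∈ S, ∀ γ, pd γ T x = ∑ μ, G γ μ x * V μ x) :
    ∃ (f : Fn m) (h : ℂ), AnalyticOnNhd ℂ f S ∧
      (∀ x ∈ S, ∀ γ, pd γ f x = ∑ μ, G γ μ x * Y μ x) ∧
      ∀ x ∈ S, eul e ρ f x = (c + 1/2) * f x + T x + h := by
  have hGD : ∀ x ∈ S, ∀ γ μ, DifferentiableAt ℂ (G γ μ) x := fun x hx γ μ =>
    (hG γ μ x hx).differentiableAt
  have hYD : ∀ x ∈ S, ∀ μ, DifferentiableAt ℂ (Y μ) x := fun x hx μ =>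
    (hY μ x hx).differentiableAt
  let w : Fin m → Fn m := fun γ x => ∑ μ, G γ μ x * Y μ x
  have hw : ∀ γ, AnalyticOnNhd ℂ (w γ) S := fun γ x hx =>
    Finset.analyticAt_fun_sum _ fun μ _ => (hG γ μ x hx).mul (hY μ x hx)
  obtain ⟨f, hf, hfd⟩ := exists_potential hS hw (by
    intro x hx i j
    obtain ⟨Z, hZ⟩ := hYd x hx
    have key : ∀ a b, pd a (w b) x =
        ∑ ν, (∑ μ, G b μ x * Ct a μ ν x) * Z ν + ∑ μ, pd a (G b μ) x * Y μ x := by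
      intro a b
      simp only [w]
      rw [pd_sum fun μ _ => (hGD x hx b μ).fun_mul (hYD x hx μ)]
      simp only [pd_mul (hGD x hx b _) (hYD x hx _), Finset.sum_add_distrib, hZ, Finset.mul_sum,
        Finset.sum_mul]
      rw [Finset.sum_comm]
      simp only [mul_assoc]
    rw [key, key]
    simp only [hCt x hx j i, hGd x hx i j])
  have hdiff : ∀ x ∈ S, ∀ γ,
      pd γ (fun y => eul e ρ f y - ((c + 1/2) * f y + T y)) x = 0 := by
    intro x hx γ
    have hfD := (hf x hx).differentiableAt
    have hTD := (hT x hx).differentiableAt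
    rw [pd_sub (analyticOnNhd_eul hf x hx).differentiableAt ((hfD.const_mul _).fun_add hTD),
      pd_add (hfD.const_mul _) hTD, pd_const_mul hfD, pd_eul hf hx, hfd x hx, hTd x hx,
      eul_congr hS (fun y hy => hfd y hy γ) hx]
    simp only [w]
    rw [eul_sum fun μ _ => (hGD x hx γ μ).fun_mul (hYD x hx μ)]
    simp only [eul_mul (hGD x hx γ _) (hYD x hx _), hGe x hx, hYe x hx, Finset.mul_sum,
      ← Finset.sum_add_distrib, ← Finset.sum_sub_distrib]
    exact Finset.sum_eq_zero fun μ _ => by ring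
  have hpre : IsPreconnected S := isPreconnected_iff_preconnectedSpace.2 inferInstance
  obtain ⟨h, hh⟩ := eq_const_of_pd_eq_zero hS hpre
    ((analyticOnNhd_eul hf).sub ((analyticOnNhd_const.mul hf).add hT)).differentiableOn hdiff
  refine ⟨f, h, hf, hfd, fun x hx => ?_⟩
  have hx' : eul e ρ f x - ((c + 1/2) * f x + T x) = h := hh x hx
  linear_combination hx'

end calculus

/-! ### The recursion over the level -/

section recursion

/-- Dependent recursive choice: a sequence can be built term by term as soon as the `n`-th
requirement only involves the first `n + 1` terms. -/
lemma exists_seq {X : Type*} [Inhabited X] (Q : ℕ → (ℕ → X) → Prop)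
    (hloc : ∀ n f g, (∀ k ≤ n, f k = g k) → Q n f → Q n g)
    (step : ∀ n f, (∀ k < n, Q k f) → ∃ y, Q n (Function.update f n y)) :
    ∃ f, ∀ n, Q n f := by
  choose! next hnext using step
  let F : ℕ → ℕ → X := fun n =>
    Nat.rec (fun _ => default) (fun n f => Function.update f n (next n f)) n
  have hF : ∀ n, F (n + 1) = Function.update (F n) n (next n (F n)) := fun _ => rfl
  have hst : ∀ k n, k < n → F n k = F (k + 1) k := by
    intro k n hkn
    induction n, hkn using Nat.le_induction with
    | base => rfl
    | succ n hn ih => rw [hF, Function.update_of_ne (by omega), ih]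
  have hQ : ∀ n, ∀ k < n, Q k (F n) := by
    intro n
    induction n with
    | zero => intro k hk; omega
    | succ n ih =>
      intro k hk
      rcases Nat.lt_succ_iff_lt_or_eq.1 hk with h | rfl
      · refine hloc k (F n) _ (fun j hj => ?_) (ih k h)
        rw [hF, Function.update_of_ne (by omega)]
      · rw [hF]; exact hnext _ _ ih
  exact ⟨fun n => F (n + 1) n, fun n =>
    hloc n (F (n + 1)) _ (fun k hk => hst k (n + 1) (Nat.lt_succ_of_le hk))
      (hQ (n + 1) n (Nat.lt_succ_self n))⟩

variable {N : ℕ}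

/-- The `(N+1)`-square matrix of functions with first `N` rows `W k` (the given `Ω_{k-1}`) and last
row `P k` (the unknown `Φ_{k-1}`). Levels `k = d + 1` are natural numbers. -/
def bordered (W : ℕ → Fin N → Fin (N + 1) → Fn (N + 1)) (P : ℕ → Fin (N + 1) → Fn (N + 1))
    (k : ℕ) (μ β : Fin (N + 1)) : Fn (N + 1) :=
  Fin.lastCases (motive := fun _ => Fn (N + 1)) (P k β) (fun κ => W k κ β) μ

@[simp] lemma bordered_last (W : ℕ → Fin N → Fin (N + 1) → Fn (N + 1))
    (P : ℕ → Fin (N + 1) → Fn (N + 1)) (k : ℕ) (β : Fin (N + 1)) :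
    bordered W P k (Fin.last N) β = P k β := by simp [bordered]

@[simp] lemma bordered_castSucc (W : ℕ → Fin N → Fin (N + 1) → Fn (N + 1))
    (P : ℕ → Fin (N + 1) → Fn (N + 1)) (k : ℕ) (κ : Fin N) (β : Fin (N + 1)) :
    bordered W P k κ.castSucc β = W k κ β := by simp [bordered]

/-- The requirements on the level-`k` data `Φ_{·,k-1} = (f k).1` and `R̃_k = (f k).2`. -/
structure Good (S : Set (Pt (N + 1))) (G : Fin (N + 1) → Fin (N + 1) → Fn (N + 1))
    (e ρ mu : Fin (N + 1) → ℂ) (W : ℕ → Fin N → Fin (N + 1) → Fn (N + 1))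
    (RE : ℕ → Fin N → Fin (N + 1) → ℂ) (k : ℕ)
    (f : ℕ → (Fin (N + 1) → Fn (N + 1)) × Matrix (Fin (N + 1)) (Fin (N + 1)) ℂ) : Prop where
  an : ∀ β, AnalyticOnNhd ℂ ((f k).1 β) S
  mat : ∀ α β, (f k).2 α.castSucc β = RE k α β
  corner : (f k).2 (Fin.last N) (Fin.last N) = 0
  comm : 1 ≤ k → ∀ β, (1/2 - mu β) * (f k).2 (Fin.last N) β = k * (f k).2 (Fin.last N) β
  zero : k = 0 → ∀ β, (f k).1 β = fun _ => if β = Fin.last N then 1 else 0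
  der : ∀ j, k = j + 1 → ∀ x ∈ S, ∀ γ β,
    pd γ ((f k).1 β) x = ∑ μ, G γ μ x * bordered W (fun l => (f l).1) j μ β x
  hom : ∀ x ∈ S, ∀ β, eul e ρ ((f k).1 β) x = (k - 1/2 + mu β) * (f k).1 β x
    + ∑ i ∈ Finset.Icc 1 k, ∑ ν, (f (k - i)).1 ν x * (f i).2 ν β

/-- The recursion over the level. The constant of integration at level `n + 1` is used to make the
Euler equation exact; when its weight `n + μ^β + 1/2` vanishes, the remaining constant becomes the
entry `(R̃_{n+1})^{N+1}_β`, which then has the weight required by the commutation relation. -/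
lemma exists_good {S : Set (Pt (N + 1))} (hS : IsOpen S) [SimplyConnectedSpace S]
    {G : Fin (N + 1) → Fin (N + 1) → Fn (N + 1)} (hG : ∀ γ μ, AnalyticOnNhd ℂ (G γ μ) S)
    (hGd : ∀ x ∈ S, ∀ i γ μ, pd i (G γ μ) x = pd γ (G i μ) x)
    {Ct : Fin (N + 1) → Fin (N + 1) → Fin (N + 1) → Fn (N + 1)}
    (hCt : ∀ x ∈ S, ∀ γ l ν, ∑ μ, G γ μ x * Ct l μ ν x = ∑ μ, G l μ x * Ct γ μ ν x)
    (hCt0 : ∀ x, ∀ l (κ : Fin N), Ct l κ.castSucc (Fin.last N) x = 0)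
    (hCtl : ∀ x, ∀ l ν, Ct l (Fin.last N) ν x = G l ν x)
    {e ρ mu : Fin (N + 1) → ℂ} (hmu : mu (Fin.last N) = 1/2)
    (hGe : ∀ x ∈ S, ∀ γ μ, eul e ρ (G γ μ) x = (1/2 - e γ + mu μ) * G γ μ x)
    {W : ℕ → Fin N → Fin (N + 1) → Fn (N + 1)} {RE : ℕ → Fin N → Fin (N + 1) → ℂ}
    (hW : ∀ k κ β, AnalyticOnNhd ℂ (W k κ β) S)
    (hW0 : ∀ x ∈ S, ∀ l κ β, pd l (W 0 κ β) x = 0)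
    (hWl : ∀ k κ x, W k κ (Fin.last N) x = 0)
    (hWd : ∀ k, ∀ x ∈ S, ∀ l κ β, pd l (W (k + 1) κ β) x =
      ∑ ν : Fin N, Ct l κ.castSucc ν.castSucc x * W k ν β x)
    (hWe : ∀ k, ∀ x ∈ S, ∀ κ β, eul e ρ (W k κ β) x = (k + mu β - mu κ.castSucc) * W k κ β x
      + ∑ i ∈ Finset.Icc 1 k, ∑ ν : Fin N, W (k - i) κ ν.castSucc x * RE i ν β) :
    ∃ f, ∀ k, Good S G e ρ mu W RE k f := by
  refine exists_seq _ ?_ ?_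
  · -- level `k` only involves the terms up to `k`
    intro k f g hfg h
    have hk := hfg k le_rfl
    refine ⟨hk ▸ h.an, hk ▸ h.mat, hk ▸ h.corner, hk ▸ h.comm, hk ▸ h.zero, ?_, ?_⟩
    · intro j hj x hx γ β
      rw [← hk, h.der j hj x hx γ β]
      simp only [bordered, hfg j (by omega)]
    · intro x hx β
      rw [← hk, h.hom x hx β]
      congr 1
      refine Finset.sum_congr rfl fun i hi => ?_
      rw [Finset.mem_Icc] at hi
      rw [hfg i hi.2, hfg (k - i) (by omega)]
  · intro k f hf
    rcases k with _ | n
    · refine ⟨⟨fun β _ => if β = Fin.last N then 1 else 0,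
        Fin.lastCases (fun _ => 0) (fun α β => RE 0 α β)⟩, ?_⟩
      refine ⟨?_, ?_, ?_, ?_, ?_, ?_, ?_⟩
      · intro β
        simp only [Function.update_self]
        exact analyticOnNhd_const
      · simp
      · simp
      · intro h; omega
      · simp
      · intro j hj; omega
      · intro x hx β
        simp only [Function.update_self]
        rw [Finset.Icc_eq_empty (by omega), Finset.sum_empty]
        simp only [eul, pd_const]
        by_cases hβ : β = Fin.last N
        · subst hβ; simp [hmu]
        · simp [hβ]
    let P : ℕ → Fin (N + 1) → Fn (N + 1) := fun l => (f l).1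
    have hXan : ∀ k ≤ n, ∀ μ β, AnalyticOnNhd ℂ (bordered W P k μ β) S := by
      intro k hk μ β
      induction μ using Fin.lastCases with
      | last => simpa using (hf k (by omega)).an β
      | cast κ => simpa using hW k κ β
    have hP0 : ∀ β, P 0 β = fun _ => if β = Fin.last N then 1 else 0 :=
      (hf 0 (by omega)).zero rfl
    have hXe : ∀ x ∈ S, ∀ μ β, eul e ρ (bordered W P n μ β) x =
        (n + mu β - mu μ) * bordered W P n μ β x
          + ∑ i ∈ Finset.Icc 1 n, ∑ ν, bordered W P (n - i) μ ν x * (f i).2 ν β := by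
      intro x hx μ β
      induction μ using Fin.lastCases with
      | last =>
        simp only [bordered_last]
        rw [(hf n (by omega)).hom x hx β, hmu]
        ring
      | cast κ =>
        simp only [bordered_castSucc]
        rw [hWe n x hx κ β]
        congr 1
        refine Finset.sum_congr rfl fun i hi => ?_
        rw [Finset.mem_Icc] at hi
        rw [Fin.sum_univ_castSucc, hWl, zero_mul, add_zero]
        simp only [(hf i (by omega)).mat]
    have hXd : ∀ β, ∀ x ∈ S, ∃ Z : Fin (N + 1) → ℂ, ∀ l μ,
        pd l (bordered W P n μ β) x = ∑ ν, Ct l μ ν x * Z ν := by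
      intro β x hx
      rcases n with _ | j
      · refine ⟨0, fun l μ => ?_⟩
        simp only [Pi.zero_apply, mul_zero, Finset.sum_const_zero]
        induction μ using Fin.lastCases with
        | last => rw [bordered_last, hP0, pd_const]
        | cast κ => rw [bordered_castSucc, hW0 x hx]
      · refine ⟨fun ν => bordered W P j ν β x, fun l μ => ?_⟩
        induction μ using Fin.lastCases with
        | last =>
          rw [bordered_last, (hf (j + 1) (by omega)).der j rfl x hx]
          simp only [hCtl]; rfl
        | cast κ =>
          rw [bordered_castSucc, hWd j x hx, Fin.sum_univ_castSucc, hCt0, zero_mul, add_zero]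
          simp only [bordered_castSucc]
    have hstep : ∀ β, ∃ (p : Fn (N + 1)) (h : ℂ), AnalyticOnNhd ℂ p S ∧
        (∀ x ∈ S, ∀ γ, pd γ p x = ∑ μ, G γ μ x * bordered W P n μ β x) ∧
        ∀ x ∈ S, eul e ρ p x = (n + mu β + 1/2) * p x
          + ∑ i ∈ Finset.Icc 1 n, ∑ ν, P (n + 1 - i) ν x * (f i).2 ν β + h := by
      intro β
      have hPD : ∀ i ∈ Finset.Icc 1 n, ∀ ν, AnalyticOnNhd ℂ (P (n + 1 - i) ν) S := by
        intro i hi ν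
        rw [Finset.mem_Icc] at hi
        exact (hf _ (by omega)).an ν
      refine exists_step hS hG hGd hCt hGe
        (Y := fun μ => bordered W P n μ β)
        (V := fun μ x => ∑ i ∈ Finset.Icc 1 n, ∑ ν, bordered W P (n - i) μ ν x * (f i).2 ν β)
        (T := fun x => ∑ i ∈ Finset.Icc 1 n, ∑ ν, P (n + 1 - i) ν x * (f i).2 ν β)
        (fun μ => hXan n le_rfl μ β) (hXd β) (fun x hx μ => hXe x hx μ β) ?_ ?_
      · exact fun x hx => Finset.analyticAt_fun_sum _ fun i hi =>
          Finset.analyticAt_fun_sum _ fun ν _ => (hPD i hi ν x hx).mul analyticAt_const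
      · intro x hx γ
        rw [pd_sum fun i hi => DifferentiableAt.fun_sum fun ν _ =>
          (hPD i hi ν x hx).differentiableAt.mul_const _]
        simp only [Finset.mul_sum]
        rw [Finset.sum_comm]
        refine Finset.sum_congr rfl fun i hi => ?_
        rw [pd_sum fun ν _ => (hPD i hi ν x hx).differentiableAt.mul_const _, Finset.sum_comm]
        refine Finset.sum_congr rfl fun ν _ => ?_
        rw [pd_mul_const (hPD i hi ν x hx).differentiableAt]
        rw [Finset.mem_Icc] at hi
        rw [(hf (n + 1 - i) (by omega)).der (n - i) (by omega) x hx, Finset.sum_mul]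
        exact Finset.sum_congr rfl fun μ _ => by ring
    choose p h hpan hpd hpe using hstep
    -- the constant `h β` is absorbed in `p β`, except in the resonant case `n + μ^β + 1/2 = 0`
    let a : Fin (N + 1) → ℂ := fun β => n + mu β + 1/2
    let c : Fin (N + 1) → ℂ := fun β => if a β = 0 then 0 else h β / a β
    let b : Fin (N + 1) → ℂ := fun β => if a β = 0 then h β else 0
    have hcb : ∀ β, a β * c β + b β = h β := by
      intro β
      simp only [c, b]
      split_ifs with h0
      · simp
      · rw [mul_div_cancel₀ _ h0, add_zero]
    have hab : ∀ β, a β * b β = 0 := by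
      intro β
      simp only [b]
      split_ifs with h0 <;> simp [h0]
    have hal : a (Fin.last N) ≠ 0 := by
      simp only [a, hmu]
      have : (n : ℂ) + 1/2 + 1/2 = ((n + 1 : ℕ) : ℂ) := by push_cast; ring
      rw [this]
      exact Nat.cast_ne_zero.2 (by omega)
    have hpD : ∀ x ∈ S, ∀ β, DifferentiableAt ℂ (p β) x := fun x hx β =>
      (hpan β x hx).differentiableAt
    have hpc : ∀ x ∈ S, ∀ β γ, pd γ (fun y => p β y + c β) x = pd γ (p β) x := by
      intro x hx β γ
      rw [pd_add (hpD x hx β) (differentiableAt_const _), pd_const, add_zero]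
    have hup : ∀ y, ∀ i ≤ n, Function.update f (n + 1) y i = f i := fun y i hi =>
      Function.update_of_ne (by omega) _ _
    refine ⟨⟨fun β x => p β x + c β, Fin.lastCases b (fun α β => RE (n + 1) α β)⟩, ?_⟩
    refine ⟨?_, ?_, ?_, ?_, ?_, ?_, ?_⟩
    · intro β
      simp only [Function.update_self]
      exact (hpan β).add analyticOnNhd_const
    · simp
    · simp [b, hal]
    · intro _ β
      simp only [Function.update_self, Fin.lastCases_last]
      have := hab β
      simp only [a] at this
      push_cast
      linear_combination -this
    · intro h0; omega
    · intro j hj x hx γ β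
      obtain rfl : n = j := by omega
      simp only [Function.update_self]
      rw [hpc x hx, hpd β x hx]
      refine Finset.sum_congr rfl fun μ _ => ?_
      simp only [bordered, hup _ n le_rfl, P]
    · intro x hx β
      rw [Finset.sum_Icc_succ_top (by omega)]
      simp only [Function.update_self, Nat.sub_self, hup _ 0 (Nat.zero_le n)]
      rw [Fin.sum_univ_castSucc (fun ν => (f 0).1 ν x * _)]
      have h00 := fun ν => congrFun (hP0 ν) x
      simp only [P] at h00
      simp only [h00, (Fin.castSucc_lt_last _).ne, if_false, if_true, zero_mul,
        Finset.sum_const_zero, one_mul, zero_add, Fin.lastCases_last]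
      have hs : ∑ i ∈ Finset.Icc 1 n, ∑ ν,
          (Function.update f (n + 1) (⟨fun β x => p β x + c β,
            Fin.lastCases b (fun α β => RE (n + 1) α β)⟩ :
              (Fin (N + 1) → Fn (N + 1)) × Matrix (Fin (N + 1)) (Fin (N + 1)) ℂ)
            (n + 1 - i)).1 ν x * (Function.update f (n + 1) (⟨fun β x => p β x + c β,
            Fin.lastCases b (fun α β => RE (n + 1) α β)⟩ :
              (Fin (N + 1) → Fn (N + 1)) × Matrix (Fin (N + 1)) (Fin (N + 1)) ℂ) i).2 ν β =
          ∑ i ∈ Finset.Icc 1 n, ∑ ν, P (n + 1 - i) ν x * (f i).2 ν β := by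
        refine Finset.sum_congr rfl fun i hi => ?_
        rw [Finset.mem_Icc] at hi
        rw [hup _ i hi.2, hup _ (n + 1 - i) (by omega)]
      rw [hs]
      have he : eul e ρ (fun y => p β y + c β) x = eul e ρ (p β) x := by
        simp only [eul, hpc x hx]
      rw [he, hpe β x hx]
      have := hcb β
      simp only [a] at this
      push_cast
      linear_combination -this

end recursion

/-! ### Geometry of `M × U` and the open WDVV equations -/

section product
variable {N : ℕ}

lemma prj_eq (x : Pt (N + 1)) :
    prj x = ContinuousLinearMap.pi (R := ℂ) (fun i : Fin N =>
      ContinuousLinearMap.proj (R := ℂ) (φ := fun _ : Fin (N + 1) => ℂ) i.castSucc) x := rfl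

lemma hasFDerivAt_prj (x : Pt (N + 1)) :
    HasFDerivAt (prj (N := N)) (ContinuousLinearMap.pi (R := ℂ) (fun i : Fin N =>
      ContinuousLinearMap.proj (R := ℂ) (φ := fun _ : Fin (N + 1) => ℂ) i.castSucc)) x :=
  (ContinuousLinearMap.pi (R := ℂ) (fun i : Fin N =>
      ContinuousLinearMap.proj (R := ℂ) (φ := fun _ : Fin (N + 1) => ℂ) i.castSucc)).hasFDerivAt

lemma continuous_prj : Continuous (prj (N := N)) :=
  continuous_pi fun i => continuous_apply i.castSucc

lemma analyticAt_comp_prj {g : Fn N} {x : Pt (N + 1)} (hg : AnalyticAt ℂ g (prj x)) :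
    AnalyticAt ℂ (fun y => g (prj y)) x :=
  hg.comp (f := prj) ((ContinuousLinearMap.pi (R := ℂ) (fun i : Fin N =>
      ContinuousLinearMap.proj (R := ℂ) (φ := fun _ : Fin (N + 1) => ℂ) i.castSucc)).analyticAt x)

lemma pd_comp_prj {g : Fn N} {x : Pt (N + 1)} (hg : DifferentiableAt ℂ g (prj x)) (i : Fin N) :
    pd i.castSucc (fun y => g (prj y)) x = pd i g (prj x) := by
  have h := hg.hasFDerivAt.comp x (hasFDerivAt_prj x)
  change fderiv ℂ (g ∘ prj) x _ = _
  rw [h.fderiv]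
  simp only [pd, ContinuousLinearMap.comp_apply]
  congr 1
  ext j
  simp [Pi.single_apply]

lemma pd_last_comp_prj {g : Fn N} {x : Pt (N + 1)} (hg : DifferentiableAt ℂ g (prj x)) :
    pd (Fin.last N) (fun y => g (prj y)) x = 0 := by
  have h := hg.hasFDerivAt.comp x (hasFDerivAt_prj x)
  change fderiv ℂ (g ∘ prj) x _ = _
  rw [h.fderiv, ContinuousLinearMap.comp_apply]
  convert map_zero (fderiv ℂ g (prj x))
  ext j
  simp [(Fin.castSucc_lt_last j).ne]

lemma isOpen_MU {M : Set (Pt N)} {U : Set ℂ} (hM : IsOpen M) (hU : IsOpen U) :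
    IsOpen {x : Pt (N + 1) | prj x ∈ M ∧ x (Fin.last N) ∈ U} :=
  (hM.preimage continuous_prj).inter (hU.preimage (continuous_apply _))

/-- `M × U` as a subset of `ℂ^(N+1)` is homeomorphic to the product of the subspaces. -/
def homeoMU (M : Set (Pt N)) (U : Set ℂ) :
    {x : Pt (N + 1) | prj x ∈ M ∧ x (Fin.last N) ∈ U} ≃ₜ M × U where
  toFun x := (⟨prj x.1, x.2.1⟩, ⟨x.1 (Fin.last N), x.2.2⟩)
  invFun y := ⟨Fin.snoc (α := fun _ => ℂ) y.1.1 y.2.1, by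
    have h : prj (Fin.snoc (α := fun _ => ℂ) y.1.1 y.2.1) = y.1.1 := by
      funext i; simp [prj]
    constructor
    · rw [h]; exact y.1.2
    · simp⟩
  left_inv x := by
    ext i
    induction i using Fin.lastCases <;> simp [prj]
  right_inv y := by
    ext i <;> simp [prj]
  continuous_toFun :=
    ((continuous_prj.comp continuous_subtype_val).subtype_mk _).prodMk
      (((continuous_apply (Fin.last N)).comp continuous_subtype_val).subtype_mk _)
  continuous_invFun := by
    refine Continuous.subtype_mk (continuous_pi fun i => ?_) _
    induction i using Fin.lastCases with
    | last =>
      simp only [Fin.snoc_last]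
      exact continuous_subtype_val.comp continuous_snd
    | cast i =>
      simp only [Fin.snoc_castSucc]
      exact (continuous_apply i).comp (continuous_subtype_val.comp continuous_fst)

lemma simplyConnected_MU {M : Set (Pt N)} {U : Set ℂ} [SimplyConnectedSpace M]
    [SimplyConnectedSpace U] :
    SimplyConnectedSpace {x : Pt (N + 1) | prj x ∈ M ∧ x (Fin.last N) ∈ U} := by
  have : SimplyConnectedSpace (M × U) := simplyConnected_prod
  exact (homeoMU M U).toHomotopyEquiv.simplyConnectedSpace

@[simp] lemma OmE_last (Ω : ℤ → Pt N → Matrix (Fin N) (Fin N) ℂ) (d : ℤ) (κ : Fin N) :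
    OmE Ω d κ (Fin.last N) = fun _ => 0 := by
  funext x; simp [OmE]

@[simp] lemma OmE_castSucc (Ω : ℤ → Pt N → Matrix (Fin N) (Fin N) ℂ) (d : ℤ) (κ b : Fin N) :
    OmE Ω d κ b.castSucc = fun x => Ω d (prj x) κ b := by
  funext x; simp [OmE, (Fin.castSucc_lt_last b).ne]

/-- Second derivatives of a function that is quasi-homogeneous up to affine terms are
quasi-homogeneous. -/
lemma eul_hess {m : ℕ} {S : Set (Pt m)} (hS : IsOpen S) {e ρ : Fin m → ℂ} {f : Fn m}
    (hf : AnalyticOnNhd ℂ f S) {c : ℂ} {b : Fin m → ℂ} {E : ℂ}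
    (h : ∀ x ∈ S, eul e ρ f x = c * f x + (∑ j, b j * x j + E)) :
    ∀ x ∈ S, ∀ γ μ, eul e ρ (pd γ (pd μ f)) x = (c - e μ - e γ) * pd γ (pd μ f) x := by
  have h1 : ∀ x ∈ S, ∀ μ, eul e ρ (pd μ f) x = (c - e μ) * pd μ f x + b μ := by
    intro x hx μ
    have hfD := (hf x hx).differentiableAt
    have hc : ∀ j, DifferentiableAt ℂ (fun y : Pt m => y j) x := fun j =>
      (analyticOnNhd_coord (S := S) j x hx).differentiableAt
    have hs : DifferentiableAt ℂ (fun y : Pt m => ∑ j, b j * y j) x :=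
      DifferentiableAt.fun_sum fun j _ => (hc j).const_mul _
    have h2 := pd_congr hS h hx μ
    rw [pd_eul hf hx, pd_add (hfD.const_mul _) (hs.add_const _), pd_const_mul hfD,
      pd_add hs (differentiableAt_const _), pd_const,
      pd_sum fun j _ => (hc j).const_mul _] at h2
    simp only [pd_const_mul (hc _), pd_coord, mul_ite, mul_one, mul_zero, Finset.sum_ite_eq',
      Finset.mem_univ, if_true] at h2
    linear_combination h2
  intro x hx γ μ
  have hp := analyticOnNhd_pd hf μ
  have hpD := (hp x hx).differentiableAt
  have h2 := pd_congr hS (fun y hy => h1 y hy μ) hx γ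
  rw [pd_eul hp hx, pd_add (hpD.const_mul _) (differentiableAt_const _), pd_const_mul hpD,
    pd_const] at h2
  linear_combination h2

/-- The structure constants of the extended multiplication on `M × U`: `structC η F Fo l μ ν` is
`c^μ_{lν}` when all indices are `≤ N`, the last row `μ = N+1` is the Hessian `∂_l ∂_ν F^o`, and the
other entries vanish. -/
def structC (η : Matrix (Fin N) (Fin N) ℂ) (F : Fn N) (Fo : Fn (N + 1))
    (l μ ν : Fin (N + 1)) : Fn (N + 1) :=
  Fin.lastCases (motive := fun _ => Fn (N + 1)) (pd l (pd ν Fo))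
    (fun κ x => if hl : l = Fin.last N then 0 else if hν : ν = Fin.last N then 0 else
      ∑ j, η⁻¹ κ j * pd j (pd (l.castPred hl) (pd (ν.castPred hν) F)) (prj x)) μ

/-- The open WDVV equations in unified form: `∑_μ ∂_γ∂_μF^o c^μ_{lν}` is symmetric in `γ` and `l`.
This is what makes the 1-forms to integrate closed. -/
lemma structC_comm {η : Matrix (Fin N) (Fin N) ℂ} (hηsymm : η.IsSymm)
    {M : Set (Pt N)} (hM : IsOpen M) {MU : Set (Pt (N + 1))} (hMU : ∀ x ∈ MU, prj x ∈ M)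
    {F : Fn N} (hF : AnalyticOnNhd ℂ F M) {Fo : Fn (N + 1)} (hFo : AnalyticOnNhd ℂ Fo MU)
    (h1 : ∀ x ∈ MU, ∀ α β γ : Fin N,
        ∑ μ, ∑ ν, pd μ (pd β (pd α F)) (prj x) * η⁻¹ μ ν *
            pd γ.castSucc (pd ν.castSucc Fo) x
          + pd β.castSucc (pd α.castSucc Fo) x * pd γ.castSucc (pd (Fin.last N) Fo) x =
        ∑ μ, ∑ ν, pd μ (pd β (pd γ F)) (prj x) * η⁻¹ μ ν *
            pd α.castSucc (pd ν.castSucc Fo) x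
          + pd β.castSucc (pd γ.castSucc Fo) x * pd α.castSucc (pd (Fin.last N) Fo) x)
    (h2 : ∀ x ∈ MU, ∀ α β : Fin N,
        ∑ μ, ∑ ν, pd μ (pd β (pd α F)) (prj x) * η⁻¹ μ ν *
            pd (Fin.last N) (pd ν.castSucc Fo) x
          + pd β.castSucc (pd α.castSucc Fo) x * pd (Fin.last N) (pd (Fin.last N) Fo) x =
        pd β.castSucc (pd (Fin.last N) Fo) x * pd α.castSucc (pd (Fin.last N) Fo) x) :
    ∀ x ∈ MU, ∀ γ l ν, ∑ μ, pd γ (pd μ Fo) x * structC η F Fo l μ ν x =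
      ∑ μ, pd l (pd μ Fo) x * structC η F Fo γ μ ν x := by
  intro x hx
  have hη : ∀ i j, η⁻¹ i j = η⁻¹ j i := by
    have h : (η⁻¹).IsSymm := by
      rw [Matrix.IsSymm, Matrix.transpose_nonsing_inv, hηsymm.eq]
    exact fun i j => h.apply j i
  have hGs : ∀ a b, pd a (pd b Fo) x = pd b (pd a Fo) x := pd_comm (hFo x hx)
  have hFs : ∀ a b c, pd c (pd a (pd b F)) (prj x) = pd c (pd b (pd a F)) (prj x) :=
    fun a b c => pd_congr hM (fun y hy => pd_comm (hF y hy) a b) (hMU x hx) c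
  -- the sum over the first `N` indices, rearranged to the shape of the open WDVV equations
  have hsum : ∀ (γ : Fin (N + 1)) (l n : Fin N),
      ∑ κ : Fin N, pd γ (pd κ.castSucc Fo) x * structC η F Fo l.castSucc κ.castSucc n.castSucc x =
      ∑ μ, ∑ ν, pd μ (pd n (pd l F)) (prj x) * η⁻¹ μ ν * pd γ (pd ν.castSucc Fo) x := by
    intro γ l n
    simp only [structC, Fin.lastCases_castSucc, (Fin.castSucc_lt_last _).ne, dif_neg,
      not_false_eq_true, Fin.castPred_castSucc, Finset.mul_sum]
    rw [Finset.sum_comm]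
    refine Finset.sum_congr rfl fun μ _ => Finset.sum_congr rfl fun ν _ => ?_
    rw [hη ν μ, hFs l n μ]; ring
  have hlast : ∀ l κ : Fin N, ∀ n, structC η F Fo (Fin.last N) κ.castSucc n x = 0 := by
    intro l κ n; simp [structC]
  have key : ∀ l n : Fin N,
      ∑ μ, pd (Fin.last N) (pd μ Fo) x * structC η F Fo l.castSucc μ n.castSucc x =
      ∑ μ, pd l.castSucc (pd μ Fo) x * structC η F Fo (Fin.last N) μ n.castSucc x := by
    intro l n
    rw [Fin.sum_univ_castSucc, Fin.sum_univ_castSucc, hsum]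
    simp only [hlast l, mul_zero, Finset.sum_const_zero, zero_add]
    simp only [structC, Fin.lastCases_last]
    rw [hGs (Fin.last N) n.castSucc, hGs l.castSucc n.castSucc]
    linear_combination h2 x hx l n
  intro γ l ν
  induction ν using Fin.lastCases with
  | last =>
    rw [Fin.sum_univ_castSucc, Fin.sum_univ_castSucc]
    have h0 : ∀ (a : Fin (N + 1)) (κ : Fin N),
        structC η F Fo a κ.castSucc (Fin.last N) x = 0 := by
      intro a κ; simp [structC]
    simp only [h0, mul_zero, Finset.sum_const_zero, zero_add]
    simp only [structC, Fin.lastCases_last]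
    ring
  | cast n =>
    induction γ using Fin.lastCases with
    | last =>
      induction l using Fin.lastCases with
      | last => rfl
      | cast l => exact key l n
    | cast g =>
      induction l using Fin.lastCases with
      | last => exact (key g n).symm
      | cast l =>
        rw [Fin.sum_univ_castSucc, Fin.sum_univ_castSucc, hsum, hsum]
        simp only [structC, Fin.lastCases_last]
        rw [hGs g.castSucc n.castSucc, hGs l.castSucc n.castSucc]
        linear_combination h1 x hx l n g

end product

end helpers

/-! ### Existence of calibrations -/

theorem stmt5 (N : ℕ) (hN : 0 < N)
    (η : Matrix (Fin N) (Fin N) ℂ) (hηsymm : η.IsSymm) (hηinv : IsUnit η.det)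
    (M : Set (Pt N)) (hM : IsOpen M) (hMne : M.Nonempty) (hMsc : SimplyConnectedSpace ↥M)
    (U : Set ℂ) (hU : IsOpen U) (hUne : U.Nonempty) (hUsc : SimplyConnectedSpace ↥U)
    (MU : Set (Pt (N + 1))) (hMU : MU = {x | prj x ∈ M ∧ x (Fin.last N) ∈ U})
    -- the Frobenius manifold potential F
    (F : Fn N) (hFan : AnalyticOnNhd ℂ F M)
    (hWDVV : ∀ x ∈ M, ∀ α β γ δ' : Fin N,
      ∑ μ, ∑ ν, pd μ (pd β (pd α F)) x * η⁻¹ μ ν * pd δ' (pd γ (pd ν F)) x =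
      ∑ μ, ∑ ν, pd μ (pd β (pd δ' F)) x * η⁻¹ μ ν * pd α (pd γ (pd ν F)) x)
    (hFunit : ∀ x ∈ M, ∀ α β : Fin N, pd β (pd α (pd ⟨0, hN⟩ F)) x = η α β)
    -- conformality
    (q r : Fin N → ℂ) (hq1 : q ⟨0, hN⟩ = 0) (δ : ℂ)
    (A : Matrix (Fin N) (Fin N) ℂ) (B : Fin N → ℂ) (C : ℂ)
    (hconf : ∀ x ∈ M,
      ∑ γ, ((1 - q γ) * x γ + r γ) * pd γ F x =
        (3 - δ) * F x + (1/2) * (∑ α, ∑ β, A α β * x α * x β) + (∑ α, B α * x α) + C)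
    -- the fixed calibration (Ω^{α,0}_{β,d}, R_n) of the Frobenius manifold;
    -- `Ω d x α β` denotes `Ω^{α,0}_{β,d}` at the point `x`
    (Ω : ℤ → Pt N → Matrix (Fin N) (Fin N) ℂ) (R : ℕ → Matrix (Fin N) (Fin N) ℂ)
    (hΩan : ∀ (d : ℤ) (α β : Fin N), AnalyticOnNhd ℂ (fun x => Ω d x α β) M)
    (hΩ1 : ∀ x, Ω (-1) x = 1)
    (hΩder : ∀ (d : ℤ), 0 ≤ d → ∀ x ∈ M, ∀ α β γ : Fin N,
      pd γ (fun y => Ω d y α β) x =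
        ∑ μ, (∑ ν, η⁻¹ α ν * pd ν (pd γ (pd μ F)) x) * Ω (d - 1) x μ β)
    (hΩorth : ∀ (d : ℤ), -1 ≤ d → ∀ x ∈ M, ∀ α β : Fin N,
      ∑ p ∈ Finset.Icc (-1 : ℤ) (d + 1),
        (-1 : ℂ) ^ (p + 1) * ∑ μ, ∑ ν, Ω p x α μ * η⁻¹ μ ν * Ω (d - p) x β ν = 0)
    (hΩhom : ∀ (d : ℤ), -1 ≤ d → ∀ x ∈ M, ∀ α β : Fin N,
      ∑ θ, ((1 - q θ) * x θ + r θ) * pd θ (fun y => Ω d y α β) x =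
        ((d : ℂ) + 1 + (q β - δ/2) - (q α - δ/2)) * Ω d x α β
          + ∑ i ∈ Finset.Icc 1 (d + 1).toNat, ∑ μ, Ω (d - i) x α μ * R i μ β)
    (hRμ : ∀ n : ℕ, 1 ≤ n →
      Matrix.diagonal (fun a => q a - δ/2) * R n - R n * Matrix.diagonal (fun a => q a - δ/2)
        = (n : ℂ) • R n)
    (hRη : ∀ n : ℕ, 1 ≤ n → η * R n * η⁻¹ = ((-1 : ℂ) ^ (n - 1)) • (R n).transpose)
    -- the function F^o: open WDVV equations, unit condition, homogeneity condition
    (Fo : Fn (N + 1)) (hFoan : AnalyticOnNhd ℂ Fo MU)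
    (hoWDVV1 : ∀ x ∈ MU, ∀ α β γ : Fin N,
        ∑ μ, ∑ ν, pd μ (pd β (pd α F)) (prj x) * η⁻¹ μ ν *
            pd γ.castSucc (pd ν.castSucc Fo) x
          + pd β.castSucc (pd α.castSucc Fo) x * pd γ.castSucc (pd (Fin.last N) Fo) x =
        ∑ μ, ∑ ν, pd μ (pd β (pd γ F)) (prj x) * η⁻¹ μ ν *
            pd α.castSucc (pd ν.castSucc Fo) x
          + pd β.castSucc (pd γ.castSucc Fo) x * pd α.castSucc (pd (Fin.last N) Fo) x)
    (hoWDVV2 : ∀ x ∈ MU, ∀ α β : Fin N,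
        ∑ μ, ∑ ν, pd μ (pd β (pd α F)) (prj x) * η⁻¹ μ ν *
            pd (Fin.last N) (pd ν.castSucc Fo) x
          + pd β.castSucc (pd α.castSucc Fo) x * pd (Fin.last N) (pd (Fin.last N) Fo) x =
        pd β.castSucc (pd (Fin.last N) Fo) x * pd α.castSucc (pd (Fin.last N) Fo) x)
    (hounit1 : ∀ x ∈ MU, ∀ α : Fin N,
      pd α.castSucc (pd (⟨0, Nat.succ_pos N⟩ : Fin (N + 1)) Fo) x = 0)
    (hounit2 : ∀ x ∈ MU, pd (Fin.last N) (pd (⟨0, Nat.succ_pos N⟩ : Fin (N + 1)) Fo) x = 1)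
    (r' : ℂ) (D : Fin N → ℂ) (Dt : ℂ) (E₀ : ℂ)
    (hFohom : ∀ x ∈ MU,
      ∑ γ, ((1 - q γ) * x γ.castSucc + r γ) * pd γ.castSucc Fo x
        + ((1 - δ)/2 * x (Fin.last N) + r') * pd (Fin.last N) Fo x =
      (3 - δ)/2 * Fo x + (∑ α, D α * x α.castSucc) + Dt * x (Fin.last N) + E₀) :
    -- conclusion: there exists a calibration (Φ_{β,d}, R̃_n) of F^o
    ∃ (Φ : ℤ → Fin (N + 1) → Fn (N + 1)) (Rt : ℕ → Matrix (Fin (N + 1)) (Fin (N + 1)) ℂ),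
      (∀ (d : ℤ) (β : Fin (N + 1)), AnalyticOnNhd ℂ (Φ d β) MU) ∧
      -- Φ_{β,-1} = δ_{β,N+1}
      (∀ (β : Fin (N + 1)) (x : Pt (N + 1)),
        Φ (-1) β x = if β = Fin.last N then 1 else 0) ∧
      -- ∂Φ_{β,d}/∂t^γ = Σ_{μ≤N} ∂²F^o/∂t^γ∂t^μ Ω^{μ,0}_{β,d-1} + ∂²F^o/∂t^γ∂t^{N+1} Φ_{β,d-1}
      (∀ (d : ℤ), 0 ≤ d → ∀ x ∈ MU, ∀ (γ β : Fin (N + 1)),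
        pd γ (Φ d β) x =
          (∑ μ : Fin N, pd γ (pd μ.castSucc Fo) x * OmE Ω (d - 1) μ β x)
            + pd γ (pd (Fin.last N) Fo) x * Φ (d - 1) β x) ∧
      -- homogeneity: E^μ∂Φ_{β,d}/∂t^μ = (d+1/2+μ^β)Φ_{β,d} + Σ_{i=1}^{d+1} Φ_{μ,d-i}(R̃_i)^μ_β
      (∀ (d : ℤ), -1 ≤ d → ∀ x ∈ MU, ∀ β : Fin (N + 1),
        (∑ μ : Fin N, ((1 - q μ) * x μ.castSucc + r μ) * pd μ.castSucc (Φ d β) x)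
          + ((1 - δ)/2 * x (Fin.last N) + r') * pd (Fin.last N) (Φ d β) x =
        ((d : ℂ) + 1/2 + (if hβ : β = Fin.last N then 1/2 else q (β.castPred hβ) - δ/2))
            * Φ d β x
          + ∑ i ∈ Finset.Icc 1 (d + 1).toNat, ∑ μ, Φ (d - i) μ x * Rt i μ β) ∧
      -- (R̃_n)^α_β = (R_n)^α_β for α,β ≤ N, (R̃_n)^α_{N+1} = 0, and [μ̃, R̃_n] = nR̃_n
      (∀ (n : ℕ) (α β : Fin N), Rt n α.castSucc β.castSucc = R n α β) ∧
      (∀ (n : ℕ) (α : Fin (N + 1)), Rt n α (Fin.last N) = 0) ∧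
      (∀ n : ℕ, 1 ≤ n →
        Matrix.diagonal (fun β : Fin (N + 1) =>
            if hβ : β = Fin.last N then (1/2 : ℂ) else q (β.castPred hβ) - δ/2) * Rt n
          - Rt n * Matrix.diagonal (fun β : Fin (N + 1) =>
            if hβ : β = Fin.last N then (1/2 : ℂ) else q (β.castPred hβ) - δ/2)
          = (n : ℂ) • Rt n) := by
  subst hMU
  have hMUo : IsOpen {x : Pt (N + 1) | prj x ∈ M ∧ x (Fin.last N) ∈ U} := isOpen_MU hM hU
  set S : Set (Pt (N + 1)) := {x : Pt (N + 1) | prj x ∈ M ∧ x (Fin.last N) ∈ U} with hS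
  have hSsc : SimplyConnectedSpace S := simplyConnected_MU
  have hSM : ∀ x ∈ S, prj x ∈ M := fun x hx => hx.1
  let e : Fin (N + 1) → ℂ := Fin.snoc (α := fun _ => ℂ) (fun γ => 1 - q γ) ((1 - δ)/2)
  let ρ : Fin (N + 1) → ℂ := Fin.snoc (α := fun _ => ℂ) r r'
  let mu : Fin (N + 1) → ℂ := fun β =>
    if hβ : β = Fin.last N then 1/2 else q (β.castPred hβ) - δ/2
  have hmul : mu (Fin.last N) = 1/2 := by simp [mu]
  have hmuc : ∀ κ : Fin N, mu κ.castSucc = q κ - δ/2 := fun κ => by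
    simp [mu, (Fin.castSucc_lt_last κ).ne]
  have hemu : ∀ β, e β = 1 - mu β - δ/2 := by
    intro β
    induction β using Fin.lastCases with
    | last => simp only [e, Fin.snoc_last, hmul]; ring
    | cast κ => simp only [e, Fin.snoc_castSucc, hmuc]; ring
  have heul : ∀ (f : Fn (N + 1)) x, eul e ρ f x =
      (∑ γ : Fin N, ((1 - q γ) * x γ.castSucc + r γ) * pd γ.castSucc f x)
        + ((1 - δ)/2 * x (Fin.last N) + r') * pd (Fin.last N) f x := by
    intro f x
    simp only [eul, Fin.sum_univ_castSucc, e, ρ, Fin.snoc_castSucc, Fin.snoc_last]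
  have hΩan' : ∀ x ∈ S, ∀ d κ b, AnalyticAt ℂ (fun y => Ω d y κ b) (prj x) :=
    fun x hx d κ b => hΩan d κ b _ (hSM x hx)
  -- the homogeneity of the Hessian of `F^o`
  have hGe : ∀ x ∈ S, ∀ γ μ, eul e ρ (pd γ (pd μ Fo)) x =
      (1/2 - e γ + mu μ) * pd γ (pd μ Fo) x := by
    intro x hx γ μ
    rw [eul_hess hMUo hFoan (e := e) (ρ := ρ) (c := (3 - δ)/2)
      (b := Fin.snoc (α := fun _ => ℂ) D Dt) (E := E₀) ?_ x hx γ μ]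
    · rw [hemu μ]; ring
    · intro y hy
      rw [heul, hFohom y hy, Fin.sum_univ_castSucc]
      simp only [Fin.snoc_castSucc, Fin.snoc_last]
      ring
  obtain ⟨f, hf⟩ := exists_good (S := S) hMUo
    (G := fun γ μ => pd γ (pd μ Fo)) (Ct := structC η F Fo) (e := e) (ρ := ρ) (mu := mu)
    (W := fun k κ β => OmE Ω ((k : ℤ) - 1) κ β)
    (RE := fun n α β => if hβ : β = Fin.last N then 0 else R n α (β.castPred hβ))
    (fun γ μ => analyticOnNhd_pd (analyticOnNhd_pd hFoan μ) γ)
    (fun x hx i γ μ => pd_comm (analyticOnNhd_pd hFoan μ x hx) i γ)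
    (structC_comm hηsymm hM hSM hFan hFoan hoWDVV1 hoWDVV2)
    (fun x l κ => by simp [structC]) (fun x l ν => by simp [structC])
    hmul hGe
    (by
      intro k κ β x hx
      induction β using Fin.lastCases with
      | last => simpa using analyticAt_const
      | cast b => simpa using analyticAt_comp_prj (hΩan' x hx _ κ b))
    (by
      intro x hx l κ β
      induction β using Fin.lastCases with
      | last => simp only [OmE_last, pd_const]
      | cast b => simp only [OmE_castSucc, Nat.cast_zero, zero_sub, hΩ1, pd_const])
    (fun k κ x => by simp)
    (by
      intro k x hx l κ β
      induction β using Fin.lastCases with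
      | last => simp only [OmE_last, pd_const, mul_zero, Finset.sum_const_zero]
      | cast b =>
        simp only [OmE_castSucc]
        induction l using Fin.lastCases with
        | last =>
          rw [pd_last_comp_prj (g := fun y => Ω _ y κ b) (hΩan' x hx _ κ b).differentiableAt]
          simp [structC]
        | cast l =>
          rw [pd_comp_prj (g := fun y => Ω _ y κ b) (hΩan' x hx _ κ b).differentiableAt,
            hΩder _ (by omega) _ (hSM x hx)]
          simp only [structC, Fin.lastCases_castSucc, (Fin.castSucc_lt_last _).ne, dif_neg,
            not_false_eq_true, Fin.castPred_castSucc, Nat.cast_add, Nat.cast_one,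
            add_sub_cancel_right])
    (by
      intro k x hx κ β
      induction β using Fin.lastCases with
      | last => simp [eul, pd_const]
      | cast b =>
        have h := hΩhom ((k : ℤ) - 1) (by omega) (prj x) (hSM x hx) κ b
        rw [heul]
        simp only [OmE_castSucc]
        rw [pd_last_comp_prj (g := fun y => Ω _ y κ b) (hΩan' x hx _ κ b).differentiableAt]
        simp only [pd_comp_prj (g := fun y => Ω _ y κ b) (hΩan' x hx _ κ b).differentiableAt]
        rw [mul_zero, add_zero]
        refine h.trans ?_
        rw [hmuc, hmuc]
        congr 1
        · push_cast; ring
        · rw [sub_add_cancel, Int.toNat_natCast]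
          refine Finset.sum_congr rfl fun i hi => ?_
          rw [Finset.mem_Icc] at hi
          have hki : (((k - i : ℕ) : ℤ) - 1) = (k : ℤ) - 1 - i := by omega
          simp only [hki, (Fin.castSucc_lt_last _).ne, dif_neg, not_false_eq_true,
            Fin.castPred_castSucc])
  refine ⟨fun d => if d < -1 then fun _ _ => 0 else (f (d + 1).toNat).1, fun n => (f n).2,
    ?_, ?_, ?_, ?_, ?_, ?_, ?_⟩
  · intro d β
    by_cases hd : d < -1
    · simp only [hd, if_true]; exact analyticOnNhd_const
    · simp only [hd, if_false]; exact (hf _).an β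
  · intro β x
    simpa using congrFun ((hf 0).zero rfl β) x
  · intro d hd x hx γ β
    obtain ⟨k, rfl⟩ := Int.eq_ofNat_of_zero_le hd
    have hk1 : ¬ ((k : ℤ) < -1) := by omega
    have hk2 : ¬ ((k : ℤ) - 1 < -1) := by omega
    have hk3 : ((k : ℤ) + 1).toNat = k + 1 := by omega
    simp only [hk1, hk2, if_false, hk3, sub_add_cancel, Int.toNat_natCast]
    rw [(hf (k + 1)).der k rfl x hx, Fin.sum_univ_castSucc]
    simp only [bordered_last, bordered_castSucc]
  · intro d hd x hx β
    obtain ⟨k, hk⟩ := Int.eq_ofNat_of_zero_le (show 0 ≤ d + 1 by omega)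
    obtain rfl : d = k - 1 := by omega
    have hk2 : ¬ ((k : ℤ) - 1 < -1) := by omega
    simp only [hk2, if_false, sub_add_cancel, Int.toNat_natCast]
    rw [← heul, (hf k).hom x hx β]
    congr 1
    · simp only [mu]; push_cast; ring
    · refine Finset.sum_congr rfl fun i hi => ?_
      rw [Finset.mem_Icc] at hi
      have hi1 : ¬ ((k : ℤ) - 1 - i < -1) := by omega
      have hi2 : ((k : ℤ) - 1 - i + 1).toNat = k - i := by omega
      simp only [hi1, if_false, hi2]
  · intro n α β
    refine ((hf n).mat α β.castSucc).trans ?_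
    simp [(Fin.castSucc_lt_last β).ne]
  · intro n α
    induction α using Fin.lastCases with
    | last => exact (hf n).corner
    | cast κ => exact ((hf n).mat κ _).trans (by simp)
  · intro n hn
    change Matrix.diagonal mu * (f n).2 - (f n).2 * Matrix.diagonal mu = _
    ext α β
    rw [Matrix.sub_apply, Matrix.diagonal_mul, Matrix.mul_diagonal, Matrix.smul_apply,
      smul_eq_mul]
    induction α using Fin.lastCases with
    | last =>
      rw [hmul]
      linear_combination (hf n).comm hn β
    | cast κ =>
      simp only [(hf n).mat]
      induction β using Fin.lastCases with
      | last => simp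
      | cast b =>
        have h := congrFun (congrFun (hRμ n hn) κ) b
        rw [Matrix.sub_apply, Matrix.diagonal_mul, Matrix.mul_diagonal, Matrix.smul_apply,
          smul_eq_mul] at h
        simp only [hmuc, (Fin.castSucc_lt_last _).ne, dif_neg, not_false_eq_true,
          Fin.castPred_castSucc]
        exact h

end
end

section
/- Let (F^1,…,F^N) be a vector potential of a conformal flat F-manifold on M with a calibration (Ω^d_0, R_n), and let λ ∈ ℂ, μ := diag(q^α + λ − 3/2), R := Σ_{i≥1}R_i. For m ≥ n ≥ −1 define C_{m,n} := Σ_{d₁,d₂ ≥ −1} (−1)^{d₂+1} Ω^0_{d₁} [P_n(μ−d₂, R)]_{m−d₁−d₂} Ω^{d₂}_0 (a finite sum, since [·]_p vanishes for all but finitely many p). Then C_{m,n} = 0 identically on M for all m ≥ n ≥ −1 and all λ ∈ ℂ. -/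
/-!
At a fixed point `x ∈ M` the claim is purely algebraic. Put `Ψ̃(z) = Σ_b (-1)^b Ω^{b-1}_0 z^b`,
`Φ(z) = Σ_a Ω^0_{a-1} z^a`, `R(z) = Σ_i R_i z^i`, `θ = z d/dz`, and let `U` be the matrix of
multiplication by the Euler field. The defining relation of `Ω^0_d` says `Φ Ψ̃ = 1`, and
homogeneity of the calibration together with `∂_γ Ω^d_0 = Ω^{d-1}_0 C_γ` says
`(R(z) + Q - θ) Ψ̃ = Ψ̃ (Q + z U)` (`hom` below).

Because `[Q, R_i] = i R_i`, taking the degree-`p` part `[·]_p` is compatible with weighting `R_i`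
by `z^i`. Hence the series
`G_n(z) = Σ_{p,b} [P_n(μ - b + 1, R)]_p (-1)^b Ω^{b-1}_0 z^{p+b}` satisfies
`G_{n+1} = (R(z) + Q - θ + λ + n) G_n`, `G_{-1} = Ψ̃` (`gSeries_succ`).
Conjugating by `Ψ̃` gives `G_n = Ψ̃ V_n` with `V_{-1} = 1` and
`V_{n+1} = (Q + z U - θ + λ + n) V_n` (`gSeries_eq`). This recursion raises the degree in `z` by at
most one, so `V_n` is a polynomial of degree at most `n + 1`. Finally
`C_{m,n}` is the coefficient of `z^{m+2}` in `Φ G_n = Φ Ψ̃ V_n = V_n`, which vanishes for `m ≥ n`.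
The lemmas use the shifted index `j = n + 1`, as `Pmat` does.
-/

/-!
STATEMENT 11: For a conformal flat F-manifold with calibration `(Ω^d_0, R_n)`, `λ ∈ ℂ`,
`μ = diag(q^α + λ − 3/2)`, `R = Σ R_i`, the matrices
`C_{m,n} = Σ_{d₁,d₂ ≥ −1} (−1)^{d₂+1} Ω^0_{d₁} [P_n(μ−d₂,R)]_{m−d₁−d₂} Ω^{d₂}_0`
vanish identically on `M` for all `m ≥ n ≥ −1` and all `λ`.  (The sum is finite: the
integer `K` bounds the differences `q^α − q^β`, so `[A]_p = 0` for `|p| > K` and all the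
terms with `d₁` or `d₂` larger than `m + 1 + K` vanish.)
-/

noncomputable section

/-- `P_m(A,R)` for `m ≥ -1`, shifted: `Pmat A R (m+1) = P_m(A,R)`;
`P_{-1} = Id`, `P_{m+1} = R·P_m + P_m·(A + m + 1/2)`. -/
noncomputable def Pmat {k : ℕ} (A R : Matrix (Fin k) (Fin k) ℂ) :
    ℕ → Matrix (Fin k) (Fin k) ℂ
  | 0 => 1
  | (j + 1) => R * Pmat A R j + Pmat A R j * (A + ((j : ℂ) - 1/2) • 1)

noncomputable def PmatZ {k : ℕ} (m : ℤ) (A R : Matrix (Fin k) (Fin k) ℂ) :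
    Matrix (Fin k) (Fin k) ℂ :=
  Pmat A R (m + 1).toNat

/-- `[A]_p`: the part of `A` with `q^α − q^β = p`. -/
def projP {k : ℕ} (qv : Fin k → ℂ) (p : ℤ) (A : Matrix (Fin k) (Fin k) ℂ) :
    Matrix (Fin k) (Fin k) ℂ :=
  Matrix.of fun α β => if qv α - qv β = (p : ℂ) then A α β else 0

/-! ### Generating series -/

open PowerSeries in
/-- The Euler operator `z d/dz` on power series with matrix coefficients. -/
def eulerOp {k : ℕ} (f : PowerSeries (Matrix (Fin k) (Fin k) ℂ)) :
    PowerSeries (Matrix (Fin k) (Fin k) ℂ) :=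
  PowerSeries.mk fun n => (n : ℂ) • coeff n f

open PowerSeries in
/-- The series `Σ_{p ≥ 0} [A]_p z^p`; for `A` without parts of negative degree this is
`z^Q A z^{-Q}`, restricted to integral powers of `z`. -/
def gradedSeries {k : ℕ} (q : Fin k → ℂ) (A : Matrix (Fin k) (Fin k) ℂ) :
    PowerSeries (Matrix (Fin k) (Fin k) ℂ) :=
  PowerSeries.mk fun p => projP q p A

open PowerSeries in
/-- The series `Σ_{p,b} [P_b]_p Ψ_b z^{p+b}` attached to sequences of matrices `P_b`, `Ψ_b`. -/
def gSeries {k : ℕ} (q : Fin k → ℂ) (P Ψ : ℕ → Matrix (Fin k) (Fin k) ℂ) :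
    PowerSeries (Matrix (Fin k) (Fin k) ℂ) :=
  PowerSeries.mk fun s => ∑ b ∈ Finset.range (s + 1), projP q ((s : ℤ) - b) (P b) * Ψ b

open PowerSeries in
/-- The conjugated series: `V_0 = 1`, `V_{j+1} = (Q + c_j - θ + z U) V_j`. -/
def vSeries {k : ℕ} (Q U : Matrix (Fin k) (Fin k) ℂ) (c : ℕ → ℂ) :
    ℕ → PowerSeries (Matrix (Fin k) (Fin k) ℂ)
  | 0 => 1
  | (j + 1) => C (Q + c j • 1) * vSeries Q U c j - eulerOp (vSeries Q U c j)
      + C U * X * vSeries Q U c j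

section Algebra

open PowerSeries

variable {k : ℕ} {q : Fin k → ℂ}

/-! ### The Euler operator and the polynomials `V_j` -/

theorem eulerOp_mul (f g : PowerSeries (Matrix (Fin k) (Fin k) ℂ)) :
    eulerOp (f * g) = eulerOp f * g + f * eulerOp g := by
  ext1 n
  simp only [eulerOp, coeff_mk, coeff_mul, map_add]
  rw [Finset.smul_sum, ← Finset.sum_add_distrib]
  refine Finset.sum_congr rfl fun p hp => ?_
  have h : p.1 + p.2 = n := by simpa using hp
  rw [← h]
  simp only [Nat.cast_add, add_smul, smul_mul_assoc, mul_smul_comm]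

/-- `V_j` is a polynomial of degree at most `j`. -/
theorem coeff_vSeries (Q U : Matrix (Fin k) (Fin k) ℂ) (c : ℕ → ℂ) (j : ℕ) :
    ∀ n, j < n → coeff n (vSeries Q U c j) = 0 := by
  induction j with
  | zero => intro n hn; simp [vSeries, coeff_one, Nat.pos_iff_ne_zero.mp hn]
  | succ j ih =>
    intro n hn
    obtain ⟨n, rfl⟩ : ∃ l, n = l + 1 := ⟨n - 1, by omega⟩
    rw [vSeries]
    generalize Q + c j • 1 = Q'
    simp only [map_add, map_sub, coeff_C_mul, mul_assoc, coeff_succ_X_mul, eulerOp,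
      coeff_mk]
    rw [ih (n + 1) (by omega), ih n (by omega)]
    simp

/-! ### The grading by differences of the `q^α` -/

theorem projP_add (p : ℤ) (A B : Matrix (Fin k) (Fin k) ℂ) :
    projP q p (A + B) = projP q p A + projP q p B := by
  ext α β; simp only [projP, Matrix.of_apply, Matrix.add_apply]; split_ifs <;> simp

theorem projP_sum {ι : Type*} (s : Finset ι) (p : ℤ) (A : ι → Matrix (Fin k) (Fin k) ℂ) :
    projP q p (∑ i ∈ s, A i) = ∑ i ∈ s, projP q p (A i) := by
  ext α β; simp only [projP, Matrix.of_apply, Matrix.sum_apply]; split_ifs <;> simp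

theorem projP_one (p : ℤ) : projP q p 1 = if p = 0 then 1 else 0 := by
  ext α β
  rcases eq_or_ne α β with rfl | h
  · by_cases hp : p = 0 <;> simp [projP, hp, eq_comm]
  · by_cases hp : p = 0 <;> simp [projP, hp, h]

theorem projP_mul_diagonal (p : ℤ) (A : Matrix (Fin k) (Fin k) ℂ) (d : Fin k → ℂ) :
    projP q p (A * Matrix.diagonal d) = projP q p A * Matrix.diagonal d := by
  ext α β; simp [projP, Matrix.mul_diagonal]

/-- The degree-`p` part satisfies `A Q = (Q - p) A`. -/
theorem projP_mul_Q (p : ℤ) (A : Matrix (Fin k) (Fin k) ℂ) (c : ℂ) :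
    projP q p A * Matrix.diagonal (fun a => q a + c) =
      (Matrix.diagonal q + (c - p) • 1) * projP q p A := by
  ext α β
  rw [Matrix.mul_diagonal, add_mul, Matrix.add_apply, Matrix.diagonal_mul, Matrix.smul_mul,
    one_mul, Matrix.smul_apply]
  simp only [projP, Matrix.of_apply, smul_eq_mul]
  split_ifs with h
  · rw [← h]; ring
  · simp

/-- Left multiplication by a matrix of degree `i` shifts the grading by `i`. -/
theorem projP_mul_left (p : ℤ) (i : ℕ) (r A : Matrix (Fin k) (Fin k) ℂ)
    (hr : ∀ α β, (q α - q β) * r α β = i * r α β) :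
    projP q p (r * A) = r * projP q (p - i) A := by
  ext α β
  simp only [projP, Matrix.of_apply, Matrix.mul_apply]
  have key : ∀ γ, r α γ * (if q γ - q β = ((p - i : ℤ) : ℂ) then A γ β else 0) =
      if q α - q β = (p : ℂ) then r α γ * A γ β else 0 := by
    intro γ
    by_cases h : r α γ = 0
    · simp [h]
    · have h1 : q α - q γ = i := mul_right_cancel₀ h (hr α γ)
      have h2 : q γ - q β = ((p - i : ℤ) : ℂ) ↔ q α - q β = (p : ℂ) := by
        push_cast
        exact ⟨fun h3 => by linear_combination h3 + h1, fun h3 => by linear_combination h3 - h1⟩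
      simp only [h2, mul_ite, mul_zero]
  simp only [key]
  split_ifs <;> simp

/-- The grading turns multiplication by `Σ_i r_i`, with `r_i` of degree `i`, into multiplication
by `Σ_i r_i z^i`. -/
theorem gradedSeries_mul_left (r : ℕ → Matrix (Fin k) (Fin k) ℂ)
    (hr : ∀ i α β, (q α - q β) * r i α β = i * r i α β) (n₀ : ℕ) (hr0 : ∀ i, n₀ < i → r i = 0)
    (A : Matrix (Fin k) (Fin k) ℂ) (hA : ∀ p : ℤ, p < 0 → projP q p A = 0) :
    gradedSeries q ((∑ i ∈ Finset.range (n₀ + 1), r i) * A) =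
      PowerSeries.mk r * gradedSeries q A := by
  ext1 p
  simp only [gradedSeries, coeff_mk, coeff_mul]
  rw [Finset.Nat.sum_antidiagonal_eq_sum_range_succ_mk, Finset.sum_mul, projP_sum]
  simp only [fun i => projP_mul_left (p : ℤ) i (r i) A (hr i)]
  calc _ = ∑ i ∈ Finset.range (n₀ + 1 + (p + 1)), r i * projP q ((p : ℤ) - i) A := by
        refine Finset.sum_subset (fun i hi => ?_) fun i _ hi => ?_
        · simp only [Finset.mem_range] at hi ⊢; omega
        · rw [hr0 i (by simpa using hi), zero_mul]
    _ = ∑ i ∈ Finset.range (p + 1), r i * projP q ((p : ℤ) - i) A := by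
        refine (Finset.sum_subset (fun i hi => ?_) fun i _ hi => ?_).symm
        · simp only [Finset.mem_range] at hi ⊢; omega
        · have : p + 1 ≤ i := by simpa using hi
          rw [hA _ (by omega), mul_zero]
    _ = _ := by
        refine Finset.sum_congr rfl fun i hi => ?_
        rw [Nat.cast_sub (by simp only [Finset.mem_range] at hi; omega)]

/-- `P_m(A, R)` has only parts of non-negative degree. -/
theorem projP_Pmat_neg (r : ℕ → Matrix (Fin k) (Fin k) ℂ)
    (hr : ∀ i α β, (q α - q β) * r i α β = i * r i α β) (s : Finset ℕ) (d : Fin k → ℂ) (j : ℕ) :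
    ∀ p : ℤ, p < 0 → projP q p (Pmat (Matrix.diagonal d) (∑ i ∈ s, r i) j) = 0 := by
  induction j with
  | zero => intro p hp; simp [Pmat, projP_one, hp.ne]
  | succ j ih =>
    intro p hp
    rw [Pmat, projP_add, Finset.sum_mul, projP_sum, ← Matrix.diagonal_one,
      ← Matrix.diagonal_smul, Matrix.diagonal_add, projP_mul_diagonal, ih p hp, zero_mul, add_zero]
    refine Finset.sum_eq_zero fun i _ => ?_
    rw [projP_mul_left p i (r i) _ (hr i), ih _ (by omega), mul_zero]

/-! ### The generating series `G_j` and its conjugation by `Ψ̃` -/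

/-- Modulo `z^n` the series `gSeries` is a finite sum of products of series. -/
theorem coeff_gSeries (P Ψ : ℕ → Matrix (Fin k) (Fin k) ℂ) (n s : ℕ) (h : s < n) :
    coeff s (gSeries q P Ψ) =
      coeff s (∑ b ∈ Finset.range n, gradedSeries q (P b) * C (Ψ b) * X ^ b) := by
  simp only [gSeries, coeff_mk, map_sum, coeff_mul_X_pow', coeff_mul_C, gradedSeries]
  rw [← Finset.sum_subset (Finset.range_subset_range.mpr (Nat.succ_le_of_lt h))]
  · refine Finset.sum_congr rfl fun b hb => ?_
    have hb' : b ≤ s := by simp only [Finset.mem_range] at hb; omega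
    rw [if_pos hb', Nat.cast_sub hb']
  · intro b _ hb
    rw [if_neg]
    simp only [Finset.mem_range] at hb; omega

theorem coeff_mul_congr {f g g' : PowerSeries (Matrix (Fin k) (Fin k) ℂ)} {n : ℕ}
    (h : ∀ s, s ≤ n → coeff s g = coeff s g') : coeff n (f * g) = coeff n (f * g') := by
  rw [coeff_mul, coeff_mul]
  refine Finset.sum_congr rfl fun p hp => ?_
  have : p.1 + p.2 = n := by simpa using hp
  rw [h p.2 (by omega)]

/-- The recursion for `P_m` becomes `G_{j+1} = (R(z) + Q + c_j - θ) G_j`. -/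
theorem gSeries_succ (r : ℕ → Matrix (Fin k) (Fin k) ℂ)
    (hr : ∀ i α β, (q α - q β) * r i α β = i * r i α β) (n₀ : ℕ) (hr0 : ∀ i, n₀ < i → r i = 0)
    (ν : ℂ) (Ψ : ℕ → Matrix (Fin k) (Fin k) ℂ) (j : ℕ) :
    gSeries q (fun b => Pmat (Matrix.diagonal fun a => q a + (ν - b))
        (∑ i ∈ Finset.range (n₀ + 1), r i) (j + 1)) Ψ =
      PowerSeries.mk r * gSeries q (fun b => Pmat (Matrix.diagonal fun a => q a + (ν - b))
        (∑ i ∈ Finset.range (n₀ + 1), r i) j) Ψ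
      + C (Matrix.diagonal q + (ν + ((j : ℂ) - 1/2)) • 1) *
          gSeries q (fun b => Pmat (Matrix.diagonal fun a => q a + (ν - b))
            (∑ i ∈ Finset.range (n₀ + 1), r i) j) Ψ
      - eulerOp (gSeries q (fun b => Pmat (Matrix.diagonal fun a => q a + (ν - b))
        (∑ i ∈ Finset.range (n₀ + 1), r i) j) Ψ) := by
  ext1 n
  set Rs := ∑ i ∈ Finset.range (n₀ + 1), r i with hRs
  rw [map_sub, map_add, coeff_mul_congr (fun s hs => coeff_gSeries _ Ψ (n + 1) s (by omega)),
    Finset.mul_sum, map_sum, coeff_C_mul, eulerOp, coeff_mk, add_sub_assoc]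
  simp only [gSeries, coeff_mk]
  rw [Finset.mul_sum, Finset.smul_sum, ← Finset.sum_sub_distrib, ← Finset.sum_add_distrib]
  refine Finset.sum_congr rfl fun b hb => ?_
  have hb' : b ≤ n := by simp only [Finset.mem_range] at hb; omega
  have hneg := projP_Pmat_neg r hr (Finset.range (n₀ + 1)) (fun a => q a + (ν - b)) j
  rw [← hRs] at hneg
  have e1 := gradedSeries_mul_left r hr n₀ hr0 _ hneg
  rw [← hRs] at e1
  have e2 : (Matrix.diagonal fun a => q a + (ν - b)) + ((j : ℂ) - 1/2) • (1 : Matrix (Fin k) (Fin k) ℂ)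
      = Matrix.diagonal fun a => q a + (ν - b + ((j : ℂ) - 1/2)) := by
    rw [← Matrix.diagonal_one, ← Matrix.diagonal_smul, Matrix.diagonal_add]
    congr 1; ext a; simp; ring
  rw [← mul_assoc, ← mul_assoc, ← e1, coeff_mul_X_pow', if_pos hb', coeff_mul_C, gradedSeries,
    coeff_mk, Nat.cast_sub hb', Pmat, e2, projP_add, projP_mul_diagonal, projP_mul_Q, add_mul,
    ← smul_mul_assoc, ← mul_assoc, ← sub_mul]
  congr 2
  simp only [add_mul, smul_mul_assoc, one_mul]
  rw [add_sub_assoc (Matrix.diagonal q * _), ← sub_smul]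
  congr 2
  push_cast; ring

/-- Conjugation by `Ψ` turns the recursion for `G_j` into the one for `V_j`. -/
theorem gSeries_eq (r : ℕ → Matrix (Fin k) (Fin k) ℂ)
    (hr : ∀ i α β, (q α - q β) * r i α β = i * r i α β) (n₀ : ℕ) (hr0 : ∀ i, n₀ < i → r i = 0)
    (ν : ℂ) (Ψ : ℕ → Matrix (Fin k) (Fin k) ℂ) (U : Matrix (Fin k) (Fin k) ℂ)
    (hom : PowerSeries.mk r * PowerSeries.mk Ψ + C (Matrix.diagonal q) * PowerSeries.mk Ψ
      - eulerOp (PowerSeries.mk Ψ) = PowerSeries.mk Ψ * (C (Matrix.diagonal q) + C U * X))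
    (j : ℕ) :
    gSeries q (fun b => Pmat (Matrix.diagonal fun a => q a + (ν - b))
        (∑ i ∈ Finset.range (n₀ + 1), r i) j) Ψ =
      PowerSeries.mk Ψ * vSeries (Matrix.diagonal q) U (fun j => ν + ((j : ℂ) - 1/2)) j := by
  induction j with
  | zero =>
    ext1 n
    simp only [gSeries, Pmat, vSeries, mul_one, coeff_mk, projP_one]
    rw [Finset.sum_eq_single n]
    · simp
    · intro b _ hb; rw [if_neg (by omega), zero_mul]
    · simp
  | succ j ih =>
    rw [gSeries_succ r hr n₀ hr0, ih, eulerOp_mul, vSeries]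
    generalize vSeries (Matrix.diagonal q) U (fun j => ν + ((j : ℂ) - 1/2)) j = V
    -- scalar matrices are central
    have hc : ∀ f : PowerSeries (Matrix (Fin k) (Fin k) ℂ),
        C ((ν + ((j : ℂ) - 1/2)) • (1 : Matrix (Fin k) (Fin k) ℂ)) * f =
          f * C ((ν + ((j : ℂ) - 1/2)) • 1) := by
      intro f; ext1 n; simp only [coeff_C_mul, coeff_mul_C]; simp
    have h2 := congrArg (· * V) hom
    simp only [sub_mul, add_mul, mul_add, mul_assoc] at h2
    simp only [map_add, add_mul, mul_add, mul_sub, ← mul_assoc, hc (PowerSeries.mk Ψ)]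
    simp only [mul_assoc]
    rw [← sub_eq_zero] at h2 ⊢
    rw [← h2]
    abel

/-- The algebraic core: `Φ G_j = V_j` is a polynomial of degree at most `j`. -/
theorem coeff_mul_gSeries (r : ℕ → Matrix (Fin k) (Fin k) ℂ)
    (hr : ∀ i α β, (q α - q β) * r i α β = i * r i α β) (n₀ : ℕ) (hr0 : ∀ i, n₀ < i → r i = 0)
    (ν : ℂ) (Φ Ψ : ℕ → Matrix (Fin k) (Fin k) ℂ) (U : Matrix (Fin k) (Fin k) ℂ)
    (hom : PowerSeries.mk r * PowerSeries.mk Ψ + C (Matrix.diagonal q) * PowerSeries.mk Ψ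
      - eulerOp (PowerSeries.mk Ψ) = PowerSeries.mk Ψ * (C (Matrix.diagonal q) + C U * X))
    (hinv : PowerSeries.mk Φ * PowerSeries.mk Ψ = 1) (j t L : ℕ) (hjt : j < t) (htL : t < L) :
    ∑ a ∈ Finset.range L, ∑ b ∈ Finset.range L,
      Φ a * projP q ((t : ℤ) - a - b) (Pmat (Matrix.diagonal fun i => q i + (ν - b))
        (∑ i ∈ Finset.range (n₀ + 1), r i) j) * Ψ b = 0 := by
  have key := congrArg (fun f => coeff t (PowerSeries.mk Φ * f))
    (gSeries_eq r hr n₀ hr0 ν Ψ U hom j)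
  simp only [← mul_assoc, hinv, one_mul, coeff_vSeries _ _ _ j t hjt] at key
  rw [← key, coeff_mul, Finset.Nat.sum_antidiagonal_eq_sum_range_succ_mk]
  have hneg := fun b : ℕ => projP_Pmat_neg r hr (Finset.range (n₀ + 1))
    (fun a => q a + (ν - b)) j
  have hlt : ∀ a b : ℕ, t < a + b →
      Φ a * projP q ((t : ℤ) - a - b) (Pmat (Matrix.diagonal fun i => q i + (ν - b))
        (∑ i ∈ Finset.range (n₀ + 1), r i) j) * Ψ b = 0 := by
    intro a b h
    rw [hneg b _ (by omega), mul_zero, zero_mul]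
  symm
  rw [← Finset.sum_subset (Finset.range_subset_range.mpr (Nat.succ_le_of_lt htL))]
  · refine Finset.sum_congr rfl fun a ha => ?_
    have ha' : a ≤ t := by simp only [Finset.mem_range] at ha; omega
    rw [← Finset.sum_subset (Finset.range_subset_range.mpr (by omega : t - a + 1 ≤ L))]
    · simp only [gSeries, coeff_mk, Finset.mul_sum, Nat.cast_sub ha', mul_assoc]
    · intro b _ hb
      exact hlt a b (by simp only [Finset.mem_range] at hb; omega)
  · intro a _ ha
    exact Finset.sum_eq_zero fun b _ =>
      hlt a b (by simp only [Finset.mem_range] at ha; omega)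

theorem sum_Icc_neg_one {β : Type*} [AddCommMonoid β] (f : ℤ → β) (L : ℕ) :
    ∑ d ∈ Finset.Icc (-1 : ℤ) ((L : ℤ) - 2), f d = ∑ a ∈ Finset.range L, f ((a : ℤ) - 1) := by
  refine (Finset.sum_bij (fun (a : ℕ) _ => (a : ℤ) - 1) ?_ ?_ ?_ ?_).symm
  · intro a ha; simp only [Finset.mem_range] at ha; simp only [Finset.mem_Icc]; omega
  · intro a _ b _ h; omega
  · intro d hd
    simp only [Finset.mem_Icc] at hd
    exact ⟨(d + 1).toNat, by simp only [Finset.mem_range]; omega, by omega⟩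
  · intros; rfl

end Algebra

/-! ### Reduction to power series at a point of `M` -/

theorem stmt11 (N : ℕ) (hN : 0 < N)
    (M : Set (Pt N)) (hM : IsOpen M)
    -- vector potential of a flat F-manifold
    (F : Fin N → Fn N) (hFan : ∀ α, AnalyticOnNhd ℂ (F α) M)
    (hVP1 : ∀ x ∈ M, ∀ α β : Fin N,
      pd β (pd ⟨0, hN⟩ (F α)) x = if α = β then 1 else 0)
    (hVP2 : ∀ x ∈ M, ∀ α β γ δ' : Fin N,
      ∑ μ, pd β (pd μ (F α)) x * pd γ (pd δ' (F μ)) x =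
      ∑ μ, pd γ (pd μ (F α)) x * pd β (pd δ' (F μ)) x)
    -- conformality
    (q r : Fin N → ℂ) (hq1 : q ⟨0, hN⟩ = 0)
    (A : Matrix (Fin N) (Fin N) ℂ) (B : Fin N → ℂ)
    (hconf : ∀ x ∈ M, ∀ α : Fin N,
      ∑ μ, ((1 - q μ) * x μ + r μ) * pd μ (F α) x =
        (2 - q α) * F α x + (∑ β, A α β * x β) + B α)
    -- the calibration (Ω^d_0, R_n): `Ωup d x α β` denotes `Ω^{α,d}_{β,0}(x)`
    (Ωup : ℤ → Pt N → Matrix (Fin N) (Fin N) ℂ) (R : ℕ → Matrix (Fin N) (Fin N) ℂ)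
    (hΩan : ∀ (d : ℤ) (α β : Fin N), AnalyticOnNhd ℂ (fun x => Ωup d x α β) M)
    (hΩ1 : ∀ x, Ωup (-1) x = 1) (hΩneg : ∀ d : ℤ, d < -1 → Ωup d = 0)
    (hΩder : ∀ (d : ℤ), 0 ≤ d → ∀ x ∈ M, ∀ α β γ : Fin N,
      pd γ (fun y => Ωup d y α β) x =
        ∑ μ, pd γ (pd β (F μ)) x * Ωup (d - 1) x α μ)
    (hR : ∀ n : ℕ, 1 ≤ n →
      Matrix.diagonal q * R n - R n * Matrix.diagonal q = (n : ℂ) • R n)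
    (hΩhom : ∀ (d : ℤ), -1 ≤ d → ∀ x ∈ M, ∀ α β : Fin N,
      ∑ θ, ((1 - q θ) * x θ + r θ) * pd θ (fun y => Ωup d y α β) x =
        ((d : ℂ) + 1) * Ωup d x α β
          + (Ωup d x * Matrix.diagonal q - Matrix.diagonal q * Ωup d x) α β
          + ∑ i ∈ Finset.Icc 1 (d + 1).toNat,
              (-1 : ℂ) ^ (i - 1) * (R i * Ωup (d - i) x) α β)
    -- only finitely many of the R_n are non-zero; `Rsum = Σ R_i`
    (n₀ : ℕ) (hRtop : ∀ n : ℕ, n₀ < n → R n = 0)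
    (Rsum : Matrix (Fin N) (Fin N) ℂ) (hRsum : Rsum = ∑ i ∈ Finset.Icc 1 n₀, R i)
    -- the matrices Ω^0_d, obtained by the inverse generating-series relation
    (Ωlow : ℤ → Pt N → Matrix (Fin N) (Fin N) ℂ)
    (hlow1 : ∀ x, Ωlow (-1) x = 1) (hlowneg : ∀ d : ℤ, d < -1 → Ωlow d = 0)
    (hinv : ∀ n : ℕ, 1 ≤ n → ∀ x ∈ M,
      ∑ k ∈ Finset.range (n + 1),
        ((-1 : ℂ) ^ k) • (Ωlow ((k : ℤ) - 1) x * Ωup ((n : ℤ) - 1 - k) x) = 0)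
    -- a bound K for the integer differences of the q^α
    (K : ℕ) (hK : ∀ (α β : Fin N) (p : ℤ), (p : ℂ) = q α - q β → p.natAbs ≤ K)
    -- the parameter λ and μ = diag(q^α + λ - 3/2)
    (lam : ℂ) (μm : Matrix (Fin N) (Fin N) ℂ)
    (hμ : μm = Matrix.diagonal fun a => q a + lam - 3/2) :
    -- conclusion: C_{m,n} = 0 on M for all m ≥ n ≥ -1
    ∀ (m n : ℤ), -1 ≤ n → n ≤ m → ∀ x ∈ M,
      ∑ d₁ ∈ Finset.Icc (-1 : ℤ) (m + 1 + K), ∑ d₂ ∈ Finset.Icc (-1 : ℤ) (m + 1 + K),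
        ((-1 : ℂ) ^ (d₂ + 1)) •
          (Ωlow d₁ x *
            projP q (m - d₁ - d₂) (PmatZ n (μm - (d₂ : ℂ) • 1) Rsum) *
            Ωup d₂ x) = 0 := by
  intro m n hn hmn x hx
  set ρ : ℕ → Matrix (Fin N) (Fin N) ℂ := fun i => if i = 0 then 0 else R i with hρ
  -- multiplication by the Euler vector field
  set U : Matrix (Fin N) (Fin N) ℂ := Matrix.of fun μ β =>
    ∑ θ, ((1 - q θ) * x θ + r θ) * pd θ (pd β (F μ)) x with hU
  set Φ : ℕ → Matrix (Fin N) (Fin N) ℂ := fun a => Ωlow ((a : ℤ) - 1) x with hΦ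
  set Ψ : ℕ → Matrix (Fin N) (Fin N) ℂ :=
    fun b => (-1 : ℂ) ^ b • Ωup ((b : ℤ) - 1) x with hΨ
  have hρhom : ∀ i α β, (q α - q β) * ρ i α β = i * ρ i α β := by
    intro i α β
    rcases Nat.eq_zero_or_pos i with rfl | hi
    · simp [hρ]
    · have h := congrFun (congrFun (hR i hi) α) β
      simp only [Matrix.sub_apply, Matrix.diagonal_mul, Matrix.mul_diagonal, Matrix.smul_apply,
        smul_eq_mul] at h
      simp only [hρ, if_neg hi.ne']
      linear_combination h
  have hρtop : ∀ i, n₀ < i → ρ i = 0 := by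
    intro i hi
    simp only [hρ, if_neg (by omega : i ≠ 0), hRtop i hi]
  have hρsum : Rsum = ∑ i ∈ Finset.range (n₀ + 1), ρ i := by
    rw [hRsum, Finset.sum_range_succ']
    simp only [hρ, if_true, add_zero, Nat.add_eq_zero_iff, one_ne_zero, and_false, if_false]
    rw [Finset.range_eq_Ico, Finset.sum_Ico_add' R 0 n₀ 1]
    rfl
  -- `ΦΨ̃ = 1` is the defining relation of the matrices `Ω^0_d`
  have hinv' : PowerSeries.mk Φ * PowerSeries.mk Ψ = 1 := by
    ext1 s
    rw [PowerSeries.coeff_mul, Finset.Nat.sum_antidiagonal_eq_sum_range_succ_mk]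
    simp only [PowerSeries.coeff_mk]
    rcases Nat.eq_zero_or_pos s with rfl | hs
    · simp [hΦ, hΨ, hlow1, hΩ1]
    · rw [PowerSeries.coeff_one, if_neg hs.ne', ← smul_zero ((-1 : ℂ) ^ s), ← hinv s hs x hx,
        Finset.smul_sum]
      refine Finset.sum_congr rfl fun a ha => ?_
      have ha' : a ≤ s := by simp only [Finset.mem_range] at ha; omega
      simp only [hΦ, hΨ, mul_smul_comm, smul_smul]
      have e : (-1 : ℂ) ^ (s - a) = (-1) ^ s * (-1) ^ a := by
        obtain ⟨l, rfl⟩ := Nat.exists_eq_add_of_le ha'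
        rw [Nat.add_sub_cancel_left, pow_add, mul_right_comm, ← mul_pow]; simp
      rw [e, Nat.cast_sub ha', sub_right_comm]
  -- homogeneity of the calibration, multiplied by `-(-1)^s` in degree `s`
  have hom : PowerSeries.mk ρ * PowerSeries.mk Ψ
      + PowerSeries.C (Matrix.diagonal q) * PowerSeries.mk Ψ - eulerOp (PowerSeries.mk Ψ)
      = PowerSeries.mk Ψ * (PowerSeries.C (Matrix.diagonal q) + PowerSeries.C U * PowerSeries.X) := by
    ext1 s
    rcases s with _ | e
    · simp [eulerOp, mul_add, ← mul_assoc, hρ, hΨ, hΩ1]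
    · rw [mul_add, ← mul_assoc, map_add, map_sub, map_add, PowerSeries.coeff_succ_mul_X,
        PowerSeries.coeff_mul_C, PowerSeries.coeff_mul_C, PowerSeries.coeff_C_mul,
        PowerSeries.coeff_mul, Finset.Nat.sum_antidiagonal_eq_sum_range_succ_mk]
      simp only [eulerOp, PowerSeries.coeff_mk]
      ext α β
      have h := hΩhom e (by omega) x hx α β
      -- the left-hand side of the homogeneity equation is an entry of `Ω^{e-1}_0 U`
      have hL : ∑ θ, ((1 - q θ) * x θ + r θ) * pd θ (fun y => Ωup e y α β) x =
          (Ωup ((e : ℤ) - 1) x * U) α β := by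
        simp only [hΩder e (by omega) x hx, Matrix.mul_apply, hU, Matrix.of_apply,
          Finset.mul_sum]
        rw [Finset.sum_comm]
        refine Finset.sum_congr rfl fun μ _ => Finset.sum_congr rfl fun θ _ => ?_
        ring
      have hS : (∑ i ∈ Finset.range (e + 1 + 1), ρ i * Ψ (e + 1 - i)) α β = -(-1 : ℂ) ^ (e + 1) *
          ∑ i ∈ Finset.Icc 1 ((e : ℤ) + 1).toNat,
              (-1 : ℂ) ^ (i - 1) * (R i * Ωup ((e : ℤ) - i) x) α β := by
        rw [Finset.sum_range_succ', Matrix.add_apply, Matrix.sum_apply, Finset.mul_sum,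
          (by omega : ((e : ℤ) + 1).toNat = e + 1), Finset.range_eq_Ico,
          Finset.sum_Ico_add' (fun i => (ρ i * Ψ (e + 1 - i)) α β) 0 (e + 1) 1]
        have e0 : (ρ 0 * Ψ (e + 1 - 0)) α β = 0 := by simp [hρ]
        rw [e0, add_zero]
        refine Finset.sum_congr rfl fun i hi => ?_
        have hi' : 1 ≤ i ∧ i ≤ e + 1 := by
          simp only [Finset.mem_Icc] at hi; omega
        obtain ⟨i, rfl⟩ : ∃ l, i = l + 1 := ⟨i - 1, by omega⟩
        obtain ⟨l, rfl⟩ := Nat.exists_eq_add_of_le (by omega : i ≤ e)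
        have e1 : i + l + 1 - (i + 1) = l := by omega
        have e2 : ((l : ℤ) - 1) = ((i + l : ℕ) : ℤ) - ((i + 1 : ℕ) : ℤ) := by push_cast; ring
        have e3 : (-1 : ℂ) ^ i * (-1) ^ i = 1 := by rw [← mul_pow]; simp
        have e5 : ρ (i + 1) = R (i + 1) := by simp [hρ]
        simp only [hΨ, e1, ← e2, Nat.add_sub_cancel, e5,
          mul_smul_comm, Matrix.smul_apply, smul_eq_mul]
        rw [pow_succ, pow_add]
        linear_combination (-(-1 : ℂ) ^ l * (R (i + 1) * Ωup ((l : ℤ) - 1) x) α β) * e3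
      rw [hL] at h
      rw [Matrix.sub_apply, Matrix.add_apply, hS, Matrix.add_apply]
      simp only [hΨ, smul_mul_assoc, mul_smul_comm, Matrix.smul_apply, smul_eq_mul]
      have e4 : ((e + 1 : ℕ) : ℤ) - 1 = e := by push_cast; ring
      rw [e4]
      rw [Matrix.sub_apply] at h
      push_cast at h ⊢
      rw [pow_succ]
      linear_combination (-(-1 : ℂ) ^ e) * h
  have main := coeff_mul_gSeries ρ hρhom n₀ hρtop (lam - 1/2) Φ Ψ U hom hinv' (n + 1).toNat
    (m + 2).toNat ((m + 2).toNat + 1 + K) (by omega) (by omega)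
  have hL : m + 1 + K = (((m + 2).toNat + 1 + K : ℕ) : ℤ) - 2 := by omega
  rw [hL]
  simp only [sum_Icc_neg_one]
  rw [← main]
  refine Finset.sum_congr rfl fun a _ => Finset.sum_congr rfl fun b _ => ?_
  have e1 : m - ((a : ℤ) - 1) - ((b : ℤ) - 1) = ((m + 2).toNat : ℤ) - a - b := by omega
  have e2 : μm - (((b : ℤ) - 1 : ℤ) : ℂ) • 1 =
      Matrix.diagonal fun i => q i + (lam - 1/2 - b) := by
    rw [hμ, ← Matrix.diagonal_one, ← Matrix.diagonal_smul, Matrix.diagonal_sub]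
    congr 1; ext i; simp; ring
  rw [e1, e2, ← hρsum, sub_add_cancel, zpow_natCast, PmatZ, mul_smul_comm]

end
end

section
/- Let F(t_1,t_2) = (1/2)t_1²t_2 + e^{t_2} with metric η = ((0,1),(1,0)). For any α ∈ ℂ \ {0}, β ∈ ℂ and either choice of sign, the function F^o_{α,β}(t_1,t_2,s) := t_1 s ± 2α^{−1} e^{t_2/2} sinh(α(s+β)) satisfies the open WDVV equations, the unit condition, and the homogeneity condition t_1 ∂F^o/∂t_1 + 2 ∂F^o/∂t_2 = F^o. The same conclusions hold for the degenerate (α = 0) case F^o_{0,β}(t_1,t_2,s) := t_1 s ± 2 e^{t_2/2}(s+β), which corresponds to the solutions given by the canonical coordinates u_{1,2} = t_1 ± 2e^{t_2/2} of this Frobenius manifold. -/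
/-!
Both families have the form `F^o = t₁ s + e^{t₂/2} g(s)`, with `g = ±2α⁻¹ sinh(α(s+β))` or
`g = ±2(s+β)`. For such a function the unit and homogeneity conditions hold for every `g`, and the
open WDVV equations reduce to the scalar equation `g'² - g g'' = 4`
(`goodOpenPotential_of_ode`): the only non-trivial one,
with both indices equal to `2` in the system involving `∂²F^o/∂s²`, reads
`e^{t₂} + ¼ e^{t₂} g g'' = ¼ e^{t₂} g'²`. For the two families it becomes
`4 (cosh² - sinh²) = 4`, respectively `(±2)² - 0 = 4`.
-/

/-!
STATEMENT 19: For `F(t₁,t₂) = ½t₁²t₂ + e^{t₂}` with `η = ((0,1),(1,0))`, for any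
`α ∈ ℂ∖{0}`, `β ∈ ℂ` and either sign, the function
`F^o_{α,β}(t₁,t₂,s) = t₁s ± 2α⁻¹ e^{t₂/2} sinh(α(s+β))` satisfies the open WDVV
equations, the unit condition and the homogeneity condition
`t₁ ∂F^o/∂t₁ + 2 ∂F^o/∂t₂ = F^o`; and so does the degenerate (α = 0) function
`F^o_{0,β}(t₁,t₂,s) = t₁s ± 2e^{t₂/2}(s+β)`, which corresponds to the canonical
coordinates `u_{1,2} = t₁ ± 2e^{t₂/2}`.
-/

noncomputable section

/-- The open WDVV equations, the unit condition, and the homogeneity condition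
`t₁ ∂F^o/∂t₁ + 2 ∂F^o/∂t₂ = F^o` for a function `F^o` on ℂ³, with respect to the
Frobenius potential `F` of ℙ¹ and the metric `η`. -/
def GoodOpenPotential (η : Matrix (Fin 2) (Fin 2) ℂ) (F : Fn 2) (Fo : Fn 3) : Prop :=
  (∀ (x : Pt 3), ∀ α β γ : Fin 2,
      ∑ μ, ∑ ν, pd μ (pd β (pd α F)) (prj x) * η⁻¹ μ ν *
          pd γ.castSucc (pd ν.castSucc Fo) x
        + pd β.castSucc (pd α.castSucc Fo) x * pd γ.castSucc (pd (Fin.last 2) Fo) x =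
      ∑ μ, ∑ ν, pd μ (pd β (pd γ F)) (prj x) * η⁻¹ μ ν *
          pd α.castSucc (pd ν.castSucc Fo) x
        + pd β.castSucc (pd γ.castSucc Fo) x * pd α.castSucc (pd (Fin.last 2) Fo) x) ∧
  (∀ (x : Pt 3), ∀ α β : Fin 2,
      ∑ μ, ∑ ν, pd μ (pd β (pd α F)) (prj x) * η⁻¹ μ ν *
          pd (Fin.last 2) (pd ν.castSucc Fo) x
        + pd β.castSucc (pd α.castSucc Fo) x * pd (Fin.last 2) (pd (Fin.last 2) Fo) x =
      pd β.castSucc (pd (Fin.last 2) Fo) x * pd α.castSucc (pd (Fin.last 2) Fo) x) ∧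
  -- unit condition
  (∀ (x : Pt 3), ∀ α : Fin 2, pd α.castSucc (pd (0 : Fin 3) Fo) x = 0) ∧
  (∀ (x : Pt 3), pd (Fin.last 2) (pd (0 : Fin 3) Fo) x = 1) ∧
  -- homogeneity condition t₁ ∂F^o/∂t₁ + 2 ∂F^o/∂t₂ = F^o
  (∀ (x : Pt 3), x 0 * pd (0 : Fin 3) Fo x + 2 * pd (1 : Fin 3) Fo x = Fo x)

/-- Where `f` is differentiable, `pd i f` can be computed along the `i`-th coordinate line. -/
lemma pd_eq_of_update {n : ℕ} {i : Fin n} {f : Fn n} {x : Pt n} {d : ℂ}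
    (hf : DifferentiableAt ℂ f x)
    (hd : HasDerivAt (fun z => f (Function.update x i z)) d (x i)) : pd i f x = d := by
  have hf' : HasFDerivAt f (fderiv ℂ f x) (Function.update x i (x i)) := by
    simpa using hf.hasFDerivAt
  exact (hf'.comp_hasDerivAt (x i) (hasDerivAt_update x i (x i))).unique hd

/-- The partial derivatives of `p(t₁) q(s) + c(t₂) g(s)`, a shape that contains `F^o` and all of
its partial derivatives. -/
lemma pd_three {p q c g p' q' c' g' : ℂ → ℂ} (hp : ∀ z, HasDerivAt p (p' z) z)
    (hq : ∀ z, HasDerivAt q (q' z) z) (hc : ∀ z, HasDerivAt c (c' z) z)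
    (hg : ∀ z, HasDerivAt g (g' z) z) :
    pd (0 : Fin 3) (fun x => p (x 0) * q (x 2) + c (x 1) * g (x 2))
      = (fun x => p' (x 0) * q (x 2)) ∧
    pd (1 : Fin 3) (fun x => p (x 0) * q (x 2) + c (x 1) * g (x 2))
      = (fun x => c' (x 1) * g (x 2)) ∧
    pd (2 : Fin 3) (fun x => p (x 0) * q (x 2) + c (x 1) * g (x 2))
      = (fun x => p (x 0) * q' (x 2) + c (x 1) * g' (x 2)) := by
  have dp : Differentiable ℂ p := fun z => (hp z).differentiableAt
  have dq : Differentiable ℂ q := fun z => (hq z).differentiableAt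
  have dc : Differentiable ℂ c := fun z => (hc z).differentiableAt
  have dg : Differentiable ℂ g := fun z => (hg z).differentiableAt
  have hD : Differentiable ℂ
      (fun x : Pt 3 => p (x 0) * q (x 2) + c (x 1) * g (x 2)) := by fun_prop
  refine ⟨?_, ?_, ?_⟩ <;> funext x <;> refine pd_eq_of_update (hD x) ?_
  · simpa [Function.update_apply] using ((hp (x 0)).mul_const (q (x 2)))
  · simpa [Function.update_apply] using ((hc (x 1)).mul_const (g (x 2)))
  · simpa [Function.update_apply] using
      ((hq (x 2)).const_mul (p (x 0))).fun_add ((hg (x 2)).const_mul (c (x 1)))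

/-- The partial derivatives of `p(t₁) q(t₂) + c(t₂)`, a shape that contains `F` and all of its
partial derivatives. -/
lemma pd_two {p q c p' q' c' : ℂ → ℂ} (hp : ∀ z, HasDerivAt p (p' z) z)
    (hq : ∀ z, HasDerivAt q (q' z) z) (hc : ∀ z, HasDerivAt c (c' z) z) :
    pd (0 : Fin 2) (fun x => p (x 0) * q (x 1) + c (x 1)) = (fun x => p' (x 0) * q (x 1)) ∧
    pd (1 : Fin 2) (fun x => p (x 0) * q (x 1) + c (x 1))
      = (fun x => p (x 0) * q' (x 1) + c' (x 1)) := by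
  have dp : Differentiable ℂ p := fun z => (hp z).differentiableAt
  have dq : Differentiable ℂ q := fun z => (hq z).differentiableAt
  have dc : Differentiable ℂ c := fun z => (hc z).differentiableAt
  have hD : Differentiable ℂ (fun x : Pt 2 => p (x 0) * q (x 1) + c (x 1)) := by fun_prop
  refine ⟨?_, ?_⟩ <;> funext x <;> refine pd_eq_of_update (hD x) ?_
  · simpa [Function.update_apply] using ((hp (x 0)).mul_const (q (x 1)))
  · simpa [Function.update_apply] using ((hq (x 1)).const_mul (p (x 0))).fun_add (hc (x 1))

lemma hasDerivAt_exp_half (k z : ℂ) :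
    HasDerivAt (fun z : ℂ => k * Complex.exp (z / 2)) (k / 2 * Complex.exp (z / 2)) z := by
  have h := (((hasDerivAt_id z).div_const 2).cexp).const_mul k
  exact h.congr_deriv (by simp only [id]; ring)

/-- `t₁ s + e^{t₂/2} g(s)` is a homogeneous open potential as soon as `g'² - g g'' = 4`. -/
lemma goodOpenPotential_of_ode {g g' g'' : ℂ → ℂ} (hg : ∀ z, HasDerivAt g (g' z) z)
    (hg' : ∀ z, HasDerivAt g' (g'' z) z) (hode : ∀ z, g' z ^ 2 - g z * g'' z = 4) :
    GoodOpenPotential !![0, 1; 1, 0] (fun x => (1/2) * x 0 ^ 2 * x 1 + Complex.exp (x 1))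
      (fun x => x 0 * x 2 + Complex.exp (x 1 / 2) * g (x 2)) := by
  have hid : ∀ z : ℂ, HasDerivAt (fun z : ℂ => z) 1 z := fun z => hasDerivAt_id z
  have hk : ∀ k z : ℂ, HasDerivAt (fun _ : ℂ => k) 0 z := fun k z => hasDerivAt_const z k
  have hsq : ∀ z : ℂ, HasDerivAt (fun z : ℂ => (1/2) * z ^ 2) z z := fun z => by
    simpa using ((hasDerivAt_pow 2 z).const_mul (1/2 : ℂ))
  have hexp : ∀ z : ℂ, HasDerivAt Complex.exp (Complex.exp z) z := Complex.hasDerivAt_exp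
  have he1 : ∀ z : ℂ, HasDerivAt (fun z : ℂ => Complex.exp (z / 2))
      (1 / 2 * Complex.exp (z / 2)) z := fun z => by simpa using hasDerivAt_exp_half 1 z
  have he2 := hasDerivAt_exp_half (1 / 2)
  -- The first, second and third partial derivatives of `F`.
  obtain ⟨F0, F1⟩ := pd_two hsq hid hexp
  obtain ⟨F00, F01⟩ := pd_two hid hid (hk 0)
  obtain ⟨F10, F11⟩ := pd_two hsq (hk 1) hexp
  obtain ⟨F000, F001⟩ := pd_two (hk 1) hid (hk 0)
  obtain ⟨F010, F011⟩ := pd_two hid (hk 1) (hk 0)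
  obtain ⟨F110, F111⟩ := pd_two (hk 0) (hk 1) hexp
  -- The first and second partial derivatives of `F^o`.
  obtain ⟨G0, G1, G2⟩ := pd_three hid hid he1 hg
  obtain ⟨G00, G01, G02⟩ := pd_three (hk 1) hid (hk 0) hg
  obtain ⟨G10, G11, G12⟩ := pd_three (hk 0) hid he2 hg
  obtain ⟨G20, G21, G22⟩ := pd_three hid (hk 1) he1 hg'
  simp only [mul_zero, zero_mul, add_zero, zero_add, mul_one, one_mul] at *
  have hinv : (!![0, 1; 1, 0] : Matrix (Fin 2) (Fin 2) ℂ)⁻¹ = !![0, 1; 1, 0] := by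
    apply Matrix.inv_eq_right_inv
    ext i j
    fin_cases i <;> fin_cases j <;> simp [Matrix.mul_apply, Fin.sum_univ_two]
  have c0 : (0 : Fin 2).castSucc = (0 : Fin 3) := rfl
  have c1 : (1 : Fin 2).castSucc = (1 : Fin 3) := rfl
  have c2 : Fin.last 2 = (2 : Fin 3) := rfl
  have hee : ∀ z : ℂ, Complex.exp z = Complex.exp (z / 2) ^ 2 := fun z => by
    rw [← Complex.exp_nat_mul]; congr 1; push_cast; ring
  unfold GoodOpenPotential
  simp only [hinv, Fin.forall_fin_two, Fin.sum_univ_two, c0, c1, c2, F0, F1, F00, F01, F10, F11,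
    F000, F001, F010, F011, F110, F111, G0, G1, G2, G00, G01, G02, G10, G11, G12, G20, G21, G22,
    prj, Matrix.of_apply, Matrix.cons_val', Matrix.cons_val_zero, Matrix.cons_val_one,
    Matrix.cons_val_fin_one]
  refine ⟨fun x => ?_, fun x => ?_, fun x => ?_, fun x => ?_, fun x => ?_⟩
  · exact ⟨⟨⟨trivial, by ring⟩, trivial, by ring⟩, ⟨by ring, trivial⟩, by ring, trivial⟩
  · refine ⟨⟨by ring, by ring⟩, by ring, ?_⟩
    rw [hee (x 1)]
    linear_combination (-1 / 4 : ℂ) * Complex.exp (x 1 / 2) ^ 2 * hode (x 2)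
  · exact ⟨trivial, trivial⟩
  · trivial
  · ring

theorem stmt19
    (η : Matrix (Fin 2) (Fin 2) ℂ) (hη : η = !![0, 1; 1, 0])
    (F : Fn 2) (hF : F = fun x => (1/2) * x 0 ^ 2 * x 1 + Complex.exp (x 1))
    (ep : ℂ) (hep : ep = 1 ∨ ep = -1) (β : ℂ) :
    -- the case α ≠ 0
    (∀ a : ℂ, a ≠ 0 →
      GoodOpenPotential η F
        (fun x => x 0 * x 2 +
          ep * 2 * a⁻¹ * Complex.exp (x 1 / 2) * Complex.sinh (a * (x 2 + β)))) ∧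
    -- the degenerate case α = 0
    GoodOpenPotential η F
      (fun x => x 0 * x 2 + ep * 2 * Complex.exp (x 1 / 2) * (x 2 + β)) ∧
    -- it corresponds to the solution given by the canonical coordinate t₁ ± 2e^{t₂/2}
    (∀ x : Pt 3,
      x 0 * x 2 + ep * 2 * Complex.exp (x 1 / 2) * (x 2 + β) =
        (x 0 + ep * 2 * Complex.exp (x 1 / 2)) * x 2 + ep * 2 * β * Complex.exp (x 1 / 2)) := by
  have hep2 : ep ^ 2 = 1 := by rcases hep with rfl | rfl <;> norm_num
  subst hη hF
  refine ⟨fun a ha => ?_, ?_, fun x => by ring⟩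
  · have h1 : ∀ z : ℂ, HasDerivAt (fun z => ep * 2 * a⁻¹ * Complex.sinh (a * (z + β)))
        (ep * 2 * Complex.cosh (a * (z + β))) z := fun z => by
      have h := ((((hasDerivAt_id z).add_const β).const_mul a).csinh).const_mul (ep * 2 * a⁻¹)
      exact h.congr_deriv (by simp only [id]; field_simp)
    have h2 : ∀ z : ℂ, HasDerivAt (fun z => ep * 2 * Complex.cosh (a * (z + β)))
        (ep * 2 * a * Complex.sinh (a * (z + β))) z := fun z => by
      have h := ((((hasDerivAt_id z).add_const β).const_mul a).ccosh).const_mul (ep * 2)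
      exact h.congr_deriv (by simp only [id]; ring)
    convert goodOpenPotential_of_ode h1 h2 (fun z => ?_) using 3
    · ring
    · have hcs := Complex.cosh_sq_sub_sinh_sq (a * (z + β))
      have haa : a⁻¹ * a = 1 := inv_mul_cancel₀ ha
      linear_combination 4 * ep ^ 2 * hcs + 4 * hep2
        - 4 * ep ^ 2 * Complex.sinh (a * (z + β)) ^ 2 * haa
  · have h1 : ∀ z : ℂ, HasDerivAt (fun z => ep * 2 * (z + β)) (ep * 2) z := fun z => by
      simpa using ((hasDerivAt_id z).add_const β).const_mul (ep * 2)
    convert goodOpenPotential_of_ode h1 (fun z => hasDerivAt_const z (ep * 2)) (fun z => ?_) using 3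
    · ring
    · linear_combination 4 * hep2

end
end
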